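/- (Random fixed point theorem for a single agent) Let S be a countable complete metric space and (Ω, 𝒵, μ) an atomless probability space. Suppose X : Ω → 2^S is a measurable correspondence with nonempty compact values, 𝒟_X = {μ ∘ g⁻¹ : g a measurable selection of X} ⊆ M(S), and A : Ω × 𝒟_X → 2^S is such that for each λ ∈ 𝒟_X, A(·, λ) : Ω → 2^S is measurable, for all ω ∈ Ω, A(ω, ·) : 𝒟_X → 2^S is upper semicontinuous with nonempty compact values, and A(ω, λ) ⊆ X(ω) for all ω, λ. Then there exists λ* ∈ 𝒟_X and a measurable selection g* of X with μ ∘ (g*)⁻¹ = λ* such that g*(ω) ∈ A(ω, λ*) for μ-almost every ω ∈ Ω. -/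

import Mathlib

/-!
Write `D` for the set of laws of measurable selections of `X`. The classical route to a fixed point
is Kakutani's theorem on `D` applied to the correspondence sending `λ` to the laws of selections of
`A (·, λ)`. Two things have to be supplied: a fixed point principle on `D`, and the fact that
convexity and closedness hold for laws of pure selections, which is where the atomless measure and
the countability of `S` enter.

*Purification* (`FracAssign.purify`). A fractional assignment splits each measurable subset of `Ω`
among the points of `S`, with prescribed total masses and with prescribed forbidden regions. These
form a convex set that is compact in the product topology, so an extreme point exists. If two points
shared a non-null set in an extreme assignment, that set could be halved (no atoms) and mass exchanged
between the two points, contradicting extremality. Hence the supports of the densities partition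
`Ω`, and the label of the cell is a genuine map with the same law. Countability of `S` makes the
union of the pairwise overlaps null.

*Limits* (`exists_selection_of_tendsto`, `exists_selection_of_mixLaw`). If couplings of `μ` with
laws converging weakly to `x` are asymptotically carried by the graph of a closed-valued `F`, then
a limit along an ultrafilter, followed by shrinking balls, is a fractional assignment to `F` with
masses `x {s}`; purification makes it a selection of `F` with law `x`. With `F = X` this shows that
`D` is closed and contains finite mixtures of its members. Completeness of `S` gives tightness, so
`D` is compact by Prokhorov's theorem.

*Fixed points* (`scarf_lemma`, `brouwer_stdSimplex`, `exists_approx_mix`). Brouwer's theorem on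
the simplex is deduced from Scarf's combinatorial lemma, proved by a parity count of doors and
rooms. Choosing for each `λ ∈ D` one measurable selection `G λ` of `A (·, λ)` with law `Φ λ`, and a
finite `ε`-net of `D` with a subordinate partition of unity, Brouwer's theorem yields a law in `D`
that is a mixture of laws `Φ i` with every active `i` within `ε` of it. As `ε → 0`, a subsequence
of these laws converges to some `x ∈ D`, and upper semicontinuity makes the randomised selections
asymptotically `A (·, x)`-valued. The limit theorem with `F = A (·, x)` gives the required map.
-/

open MeasureTheory

/-- The probability space `(Ω, 𝒵, μ)` is atomless. -/
def AtomlessMeasure {T : Type*} [MeasurableSpace T] (lam : Measure T) : Prop :=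
  ∀ s : Set T, MeasurableSet s → 0 < lam s →
    ∃ u, u ⊆ s ∧ MeasurableSet u ∧ 0 < lam u ∧ lam u < lam s

/-- The set of distributions `μ ∘ g⁻¹` of measurable (a.e.) selections `g` of `X`. -/
def distrOfSelections {T Y : Type*} [MeasurableSpace T] [MeasurableSpace Y]
    [TopologicalSpace Y] (lam : Measure T) [IsProbabilityMeasure lam]
    (F : T → Set Y) : Set (ProbabilityMeasure Y) :=
  {ν | ∃ f : T → Y, Measurable f ∧ (∀ᵐ t ∂lam, f t ∈ F t) ∧
        (ν : Measure Y) = lam.map f}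

/-! ### Scarf's lemma -/

section Scarf

open Finset Function

variable {T I : Type*}

/-- `(σ, C)` is dominant for the family of utilities `u` if no point of `T` is strictly better than
the worst element of `σ` for every `i ∈ C` at once. -/
def ScarfDominant (u : I → T → ℕ) (σ : Finset T) (C : Finset I) : Prop :=
  ∀ y, ∃ i ∈ C, ∀ x ∈ σ, u i y ≤ u i x

/-- The door `d` is incident to the room `r`: the room is obtained by adding a point to the first
component or by removing an index from the second one. -/
def ScarfInc [DecidableEq T] [DecidableEq I] (d r : Finset T × Finset I) : Prop :=
  (∃ x, x ∉ d.1 ∧ r = (insert x d.1, d.2)) ∨ (∃ j ∈ d.2, r = (d.1, d.2.erase j))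

/-- A map that loses exactly one point in cardinality has a single collision `{a, b}`, and `a`, `b`
are exactly the points that can be removed without changing the image. -/
lemma exists_unique_collision {α β : Type*} [DecidableEq α] [DecidableEq β] (f : α → β)
    (s : Finset α) (h : s.card = (s.image f).card + 1) :
    ∃ a ∈ s, ∃ b ∈ s, a ≠ b ∧ ∀ k ∈ s, (s.erase k).image f = s.image f ↔ k = a ∨ k = b := by
  obtain ⟨a, ha, b, hb, hab, hf⟩ := exists_ne_map_eq_of_card_lt_of_maps_to
    (s := s) (t := s.image f) (f := f) (by omega) (fun x hx => by simpa using ⟨x, hx, rfl⟩)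
  refine ⟨a, ha, b, hb, hab, fun k hk => ⟨fun hk' => ?_, ?_⟩⟩
  · by_contra! hcon
    have h1 : ((s.erase k).erase a).image f = s.image f := by
      rw [← hk']
      apply subset_antisymm (image_subset_image (erase_subset _ _))
      intro y hy
      obtain ⟨x, hx, rfl⟩ := mem_image.1 hy
      by_cases hxa : x = a
      · subst hxa
        exact mem_image.2 ⟨b, by simp [hab.symm, hb, hcon.2.symm], hf.symm⟩
      · exact mem_image.2 ⟨x, by simp_all, rfl⟩
    have h2 := card_image_le (s := (s.erase k).erase a) (f := f)
    rw [h1, card_erase_of_mem (by simp [ha, hcon.1.symm]), card_erase_of_mem hk] at h2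
    have : 1 < s.card := one_lt_card.2 ⟨a, ha, b, hb, hab⟩
    omega
  · intro hk'
    apply subset_antisymm (image_subset_image (erase_subset _ _))
    intro y hy
    obtain ⟨x, hx, rfl⟩ := mem_image.1 hy
    by_cases hxk : x = k
    · subst hxk
      rcases hk' with rfl | rfl
      · exact mem_image.2 ⟨b, by simp [hab.symm, hb], hf.symm⟩
      · exact mem_image.2 ⟨a, by simp [hab, ha], hf⟩
    · exact mem_image.2 ⟨x, by simp_all, rfl⟩

lemma ScarfDominant.of_inc [DecidableEq T] [DecidableEq I] {u : I → T → ℕ} {d r : Finset T × Finset I} (h : ScarfInc d r)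
    (hr : ScarfDominant u r.1 r.2) : ScarfDominant u d.1 d.2 := by
  intro y
  obtain ⟨i, hi, hy⟩ := hr y
  rcases h with ⟨x, hx, rfl⟩ | ⟨j, hj, rfl⟩
  · exact ⟨i, hi, fun z hz => hy z (by simp [hz])⟩
  · exact ⟨i, mem_of_mem_erase hi, hy⟩

variable [Fintype T] [DecidableEq T] [Fintype I] [DecidableEq I]

open Classical in
/-- The dominant pairs `(σ, C)` with as many points as indices. -/
noncomputable def scarfRooms (u : I → T → ℕ) : Finset (Finset T × Finset I) :=
  univ.filter fun r => ScarfDominant u r.1 r.2 ∧ r.1.card = r.2.card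

open Classical in
/-- The dominant pairs `(τ, D)` with one more index than points, whose set of colours is
`D` without the distinguished colour `i₀`. -/
noncomputable def scarfDoors (u : I → T → ℕ) (c : T → I) (i₀ : I) :
    Finset (Finset T × Finset I) :=
  univ.filter fun d => ScarfDominant u d.1 d.2 ∧ d.2.card = d.1.card + 1 ∧ i₀ ∈ d.2 ∧
    d.1.image c = d.2.erase i₀

open Classical in
/-- Every interior door belongs to exactly two rooms: of the two indices `a`, `b` sharing their
worst point in `τ`, each can be dropped, or else compensated by adding the best point for it. -/
lemma scarf_card_rooms (u : I → T → ℕ) (hu : ∀ i, Injective (u i)) (τ : Finset T) (D : Finset I)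
    (hτ : τ.Nonempty) (hD : D.card = τ.card + 1) (hdom : ScarfDominant u τ D) :
    ((scarfRooms u).filter fun r => ScarfInc (τ, D) r).card = 2 := by
  have hmin : ∀ σ : Finset T, σ.Nonempty → ∃ m : I → T, ∀ i, m i ∈ σ ∧ ∀ x ∈ σ, u i (m i) ≤ u i x := by
    intro σ hσ
    choose m hm using fun i => exists_min_image σ (u i) hσ
    exact ⟨m, hm⟩
  have hsurj : ∀ (σ : Finset T) (C : Finset I) (m : I → T), (∀ i, m i ∈ σ ∧ ∀ x ∈ σ, u i (m i) ≤ u i x) →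
      ScarfDominant u σ C → C.image m = σ := by
    intro σ C m hm hd
    ext t
    simp only [mem_image]
    constructor
    · rintro ⟨i, -, rfl⟩; exact (hm i).1
    · intro ht
      obtain ⟨i, hi, h⟩ := hd t
      exact ⟨i, hi, hu i (le_antisymm ((hm i).2 _ ht) (h _ (hm i).1))⟩
  obtain ⟨m, hm⟩ := hmin τ hτ
  have hDm := hsurj τ D m hm hdom
  obtain ⟨a, ha, b, hb, hab, hk⟩ := exists_unique_collision m D (by rw [hDm, hD])
  rw [hDm] at hk
  -- the points that can be added to `τ` so that only the index `k` can still witness dominance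
  let M : I → Finset T := fun k => univ.filter fun y => ∀ l ∈ D.erase k, u l (m l) < u l y
  have hM : ∀ k y, y ∈ M k ↔ ∀ l ∈ D, l ≠ k → u l (m l) < u l y := by
    intro k y; simp only [M, mem_filter, mem_univ, true_and, mem_erase]; grind
  -- `P k r`: `r` is a room behind the door `(τ, D)`, reached by giving up the worst point for `k`
  let P : I → Finset T × Finset I → Prop := fun k r => r ∈ scarfRooms u ∧
    (r = (τ, D.erase k) ∨ ∃ x, x ∉ τ ∧ x ∈ M k ∧ r = (insert x τ, D))
  have h1 : ∀ k ∈ D, (D.erase k).image m = τ → ∃ r₀, ∀ r, P k r ↔ r = r₀ := by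
    intro k hkD hkm
    rcases (M k).eq_empty_or_nonempty with hMk | hMk
    · refine ⟨(τ, D.erase k), fun r => ⟨?_, ?_⟩⟩
      · rintro ⟨-, h | ⟨x, -, hx, -⟩⟩
        · exact h
        · simp [hMk] at hx
      · rintro rfl
        refine ⟨?_, Or.inl rfl⟩
        simp only [scarfRooms, mem_filter, mem_univ, true_and]
        refine ⟨fun y => ?_, by rw [card_erase_of_mem hkD]; omega⟩
        have hy : y ∉ M k := by simp [hMk]
        rw [hM] at hy
        push Not at hy
        obtain ⟨l, hl, hlk, hle⟩ := hy
        exact ⟨l, by simp [hl, hlk], fun x hx => hle.trans ((hm l).2 x hx)⟩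
    · obtain ⟨x, hx, hxmax⟩ := exists_max_image (M k) (u k) hMk
      have hxM := (hM k x).1 hx
      have hxτ : x ∉ τ := by
        intro h
        rw [← hkm, mem_image] at h
        obtain ⟨l, hl, rfl⟩ := h
        rw [mem_erase] at hl
        exact lt_irrefl _ (hxM l hl.2 hl.1)
      refine ⟨(insert x τ, D), fun r => ⟨?_, ?_⟩⟩
      · rintro ⟨hr, rfl | ⟨x', hx', hx'M, rfl⟩⟩
        · simp only [scarfRooms, mem_filter, mem_univ, true_and] at hr
          obtain ⟨l, hl, h⟩ := hr.1 x
          rw [mem_erase] at hl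
          exact absurd (h _ (hm l).1) (not_le.2 (hxM l hl.2 hl.1))
        · simp only [scarfRooms, mem_filter, mem_univ, true_and] at hr
          obtain ⟨l, hl, h⟩ := hr.1 x
          by_cases hlk : l = k
          · subst hlk
            have : x = x' := hu l (le_antisymm (h x' (by simp)) (hxmax x' hx'M))
            rw [this]
          · exact absurd (h _ (by simp [(hm l).1])) (not_le.2 (hxM l hl hlk))
      · rintro rfl
        refine ⟨?_, Or.inr ⟨x, hxτ, hx, rfl⟩⟩
        simp only [scarfRooms, mem_filter, mem_univ, true_and]
        refine ⟨fun y => ?_, by rw [card_insert_of_notMem hxτ]; omega⟩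
        by_cases hy : y ∈ M k
        · obtain ⟨l, hl, h⟩ := hdom y
          have hlk : l = k := by
            by_contra hlk
            exact absurd (h _ (hm l).1) (not_le.2 ((hM k y).1 hy l hl hlk))
          subst hlk
          refine ⟨l, hl, fun z hz => ?_⟩
          rcases mem_insert.1 hz with rfl | hz
          · exact hxmax y hy
          · exact h z hz
        · rw [hM] at hy
          push Not at hy
          obtain ⟨l, hl, hlk, hle⟩ := hy
          refine ⟨l, hl, fun z hz => ?_⟩
          rcases mem_insert.1 hz with rfl | hz
          · exact hle.trans (hxM l hl hlk).le
          · exact hle.trans ((hm l).2 z hz)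
  have h2 : ∀ r ∈ scarfRooms u, ScarfInc (τ, D) r → P a r ∨ P b r := by
    intro r hr hinc
    have hr' := hr
    simp only [scarfRooms, mem_filter, mem_univ, true_and] at hr'
    suffices h : ∃ k ∈ D, (D.erase k).image m = τ ∧ P k r by
      obtain ⟨k, hkD, h, hP⟩ := h
      rcases (hk k hkD).1 h with rfl | rfl
      · exact Or.inl hP
      · exact Or.inr hP
    rcases hinc with ⟨x, hx, rfl⟩ | ⟨k, hkD, rfl⟩
    · simp only at hx hr' hr ⊢
      obtain ⟨m', hm'⟩ := hmin (insert x τ) (by simp)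
      have hs' := hsurj _ _ m' hm' hr'.1
      have hinj : Set.InjOn m' D := card_image_iff.1 (by rw [hs']; exact hr'.2)
      obtain ⟨k, hkD, hkx⟩ : ∃ k ∈ D, m' k = x := by
        have : x ∈ D.image m' := by rw [hs']; simp
        simpa using this
      have hmm : ∀ l ∈ D, l ≠ k → m' l = m l := by
        intro l hl hlk
        have h3 : m' l ∈ τ := by
          rcases mem_insert.1 (hm' l).1 with h | h
          · exact absurd (hinj hl hkD (h.trans hkx.symm)) hlk
          · exact h
        exact hu l (le_antisymm ((hm' l).2 _ (by simp [(hm l).1])) ((hm l).2 _ h3))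
      refine ⟨k, hkD, ?_, hr, Or.inr ⟨x, hx, ?_, rfl⟩⟩
      · ext t
        simp only [mem_image, mem_erase]
        constructor
        · rintro ⟨l, -, rfl⟩; exact (hm l).1
        · intro ht
          have : t ∈ D.image m' := by rw [hs']; simp [ht]
          obtain ⟨l, hl, rfl⟩ := mem_image.1 this
          have hlk : l ≠ k := by rintro rfl; rw [hkx] at ht; exact hx ht
          exact ⟨l, ⟨hlk, hl⟩, (hmm l hl hlk).symm⟩
      · rw [hM]
        intro l hl hlk
        rw [← hmm l hl hlk]
        refine lt_of_le_of_ne ((hm' l).2 x (by simp)) fun h => ?_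
        exact hlk (hinj hl hkD ((hu l h).trans hkx.symm))
    · exact ⟨k, hkD, hsurj _ _ m hm hr'.1, hr, Or.inl rfl⟩
  have h3 : ∀ r, P a r → P b r → False := by
    rintro r ⟨-, h⟩ ⟨-, h'⟩
    rcases h with rfl | ⟨x, hx, hxM, rfl⟩ <;> rcases h' with h' | ⟨x', hx', hxM', h'⟩
    · have := congrArg Prod.snd h'
      simp only at this
      have : b ∈ D.erase b := by rw [← this]; simp [hb, hab.symm]
      simp at this
    · have := congrArg Prod.snd h'
      simp only [erase_eq_self] at this
      exact this ha
    · have := (congrArg Prod.snd h').symm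
      simp only [erase_eq_self] at this
      exact this hb
    · have := congrArg Prod.fst h'
      simp only at this
      have hxx : x = x' := by
        have : x ∈ insert x' τ := by rw [← this]; simp
        simpa [hx] using this
      subst hxx
      obtain ⟨l, hl, h⟩ := hdom x
      have h4 := h _ (hm l).1
      rw [hM] at hxM hxM'
      by_cases hla : l = a
      · exact absurd h4 (not_le.2 (hxM' l hl (by rw [hla]; exact hab)))
      · exact absurd h4 (not_le.2 (hxM l hl hla))
  obtain ⟨ra, hra⟩ := h1 a ha ((hk a ha).2 (Or.inl rfl))
  obtain ⟨rb, hrb⟩ := h1 b hb ((hk b hb).2 (Or.inr rfl))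
  rw [card_eq_two]
  refine ⟨ra, rb, ?_, ?_⟩
  · intro h
    exact h3 ra ((hra ra).2 rfl) ((hrb ra).2 h)
  · have hP : ∀ k ∈ D, ∀ r, P k r → r ∈ scarfRooms u ∧ ScarfInc (τ, D) r := by
      rintro k hkD r ⟨h, rfl | ⟨x, hx, -, rfl⟩⟩
      · exact ⟨h, Or.inr ⟨k, hkD, rfl⟩⟩
      · exact ⟨h, Or.inl ⟨x, hx, rfl⟩⟩
    ext r
    simp only [mem_filter, mem_insert, mem_singleton]
    rw [← hra, ← hrb]
    exact ⟨fun h => h2 r h.1 h.2, fun h => h.elim (hP a ha r) (hP b hb r)⟩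

open Classical in
/-- The door `(∅, {i})` is a boundary door: its only room is the best point for `i`. -/
lemma scarf_card_rooms_boundary [Nonempty T] (u : I → T → ℕ) (hu : ∀ i, Injective (u i)) (i : I) :
    ((scarfRooms u).filter fun r => ScarfInc (∅, {i}) r).card = 1 := by
  obtain ⟨x, -, hx⟩ := exists_max_image (univ : Finset T) (u i) univ_nonempty
  rw [card_eq_one]
  refine ⟨({x}, {i}), ?_⟩
  ext r
  simp only [mem_filter, mem_singleton, scarfRooms, mem_univ, true_and]
  constructor
  · rintro ⟨⟨hd, hc⟩, ⟨y, -, rfl⟩ | ⟨j, hj, rfl⟩⟩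
    · obtain ⟨l, hl, h⟩ := hd x
      simp only [mem_singleton] at hl
      subst hl
      have : x = y := hu l (le_antisymm (h y (by simp)) (hx y (by simp)))
      simp [this]
    · simp only [mem_singleton] at hj
      subst hj
      obtain ⟨l, hl, -⟩ := hd x
      simp at hl
  · rintro rfl
    refine ⟨⟨fun y => ⟨i, by simp, fun z hz => ?_⟩, by simp⟩, Or.inl ⟨x, by simp, by simp⟩⟩
    rw [mem_singleton.1 hz]
    exact hx y (by simp)

open Classical in
/-- A room has an odd number of doors exactly when it carries all of its own colours. -/
lemma scarf_odd_doors (u : I → T → ℕ) (c : T → I) (i₀ : I) (r : Finset T × Finset I)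
    (hr : r ∈ scarfRooms u) :
    Odd ((scarfDoors u c i₀).filter fun d => ScarfInc d r).card ↔ r.1.image c = r.2 := by
  obtain ⟨σ, C⟩ := r
  have hr' := hr
  simp only [scarfRooms, mem_filter, mem_univ, true_and] at hr'
  obtain ⟨hdom, hcard⟩ := hr'
  have key : ∀ d, d ∈ ((scarfDoors u c i₀).filter fun d => ScarfInc d (σ, C)) ↔
      (∃ x ∈ σ, i₀ ∈ C ∧ (σ.erase x).image c = C.erase i₀ ∧ d = (σ.erase x, C)) ∨
      (∃ j, j ∉ C ∧ i₀ ∈ insert j C ∧ σ.image c = (insert j C).erase i₀ ∧ d = (σ, insert j C)) := by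
    intro d
    simp only [mem_filter, scarfDoors, mem_univ, true_and]
    constructor
    · rintro ⟨⟨hd, hc, hi, him⟩, hinc⟩
      obtain ⟨τ, D⟩ := d
      rcases hinc with ⟨x, hx, h⟩ | ⟨j, hj, h⟩
      · simp only [Prod.mk.injEq] at h hx hi him
        obtain ⟨rfl, rfl⟩ := h
        exact Or.inl ⟨x, by simp, hi, by rw [erase_insert hx]; exact him, by rw [erase_insert hx]⟩
      · simp only [Prod.mk.injEq] at h hj hi him
        obtain ⟨rfl, rfl⟩ := h
        exact Or.inr ⟨j, by simp, by rw [insert_erase hj]; exact hi,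
          by rw [insert_erase hj]; exact him, by rw [insert_erase hj]⟩
    · rintro (⟨x, hx, hi, him, rfl⟩ | ⟨j, hj, hi, him, rfl⟩)
      · have hinc : ScarfInc (σ.erase x, C) (σ, C) :=
          Or.inl ⟨x, by simp, by simp [insert_erase hx]⟩
        refine ⟨⟨ScarfDominant.of_inc hinc hdom, ?_, hi, him⟩, hinc⟩
        simp only [card_erase_of_mem hx]
        have := card_pos.2 ⟨x, hx⟩
        omega
      · have hinc : ScarfInc (σ, insert j C) (σ, C) :=
          Or.inr ⟨j, by simp, by simp [erase_insert hj]⟩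
        refine ⟨⟨ScarfDominant.of_inc hinc hdom, ?_, hi, him⟩, hinc⟩
        simp only [card_insert_of_notMem hj]
        omega
  simp only at hdom hcard ⊢
  by_cases hcol : σ.image c = C
  · refine iff_of_true ?_ hcol
    suffices h : ((scarfDoors u c i₀).filter fun d => ScarfInc d (σ, C)).card = 1 by
      rw [h]; exact odd_one
    rw [card_eq_one]
    have hinj : Set.InjOn c σ := card_image_iff.1 (by rw [hcol]; exact hcard.symm)
    by_cases hi : i₀ ∈ C
    · obtain ⟨x, hx, hxi⟩ : ∃ x ∈ σ, c x = i₀ := by rw [← hcol] at hi; simpa using hi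
      refine ⟨(σ.erase x, C), ?_⟩
      ext d
      rw [key, mem_singleton]
      constructor
      · rintro (⟨x', hx', -, him, rfl⟩ | ⟨j, hj, hij, him, rfl⟩)
        · have : x = x' := by
            by_contra hne
            have : c x ∈ (σ.erase x').image c := mem_image_of_mem _ (by simp [hne, hx])
            rw [him, hxi] at this
            simp at this
          rw [this]
        · rw [hcol] at him
          rw [him] at hi
          simp at hi
      · rintro rfl
        refine Or.inl ⟨x, hx, hi, ?_, rfl⟩
        ext i
        simp only [mem_image, mem_erase]
        constructor
        · rintro ⟨y, ⟨hyx, hy⟩, rfl⟩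
          refine ⟨fun h => hyx (hinj hy hx (h.trans hxi.symm)), ?_⟩
          rw [← hcol]; exact mem_image_of_mem _ hy
        · rintro ⟨hii, hiC⟩
          rw [← hcol] at hiC
          obtain ⟨y, hy, rfl⟩ := mem_image.1 hiC
          exact ⟨y, ⟨by rintro rfl; exact hii hxi, hy⟩, rfl⟩
    · refine ⟨(σ, insert i₀ C), ?_⟩
      ext d
      rw [key, mem_singleton]
      constructor
      · rintro (⟨x', hx', h, -⟩ | ⟨j, hj, hij, him, rfl⟩)
        · exact absurd h hi
        · have : i₀ = j := by simpa [hi] using hij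
          rw [this]
      · rintro rfl
        exact Or.inr ⟨i₀, hi, by simp, by rw [erase_insert hi, hcol], rfl⟩
  · refine iff_of_false ?_ hcol
    rw [Nat.not_odd_iff_even]
    by_cases hi : i₀ ∈ C
    swap
    · suffices h : ((scarfDoors u c i₀).filter fun d => ScarfInc d (σ, C)) = ∅ by
        rw [h]; simp
      rw [eq_empty_iff_forall_notMem]
      intro d
      rw [key]
      rintro (⟨x', hx', h, -⟩ | ⟨j, hj, hij, him, rfl⟩)
      · exact hi h
      · have : i₀ = j := by simpa [hi] using hij
        subst this
        rw [erase_insert hi] at him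
        exact hcol him
    by_cases hce : σ.image c = C.erase i₀
    · obtain ⟨a, ha, b, hb, hab, hk⟩ := exists_unique_collision c σ (by
        rw [hce, card_erase_of_mem hi]
        have := card_pos.2 ⟨i₀, hi⟩
        omega)
      suffices h : ((scarfDoors u c i₀).filter fun d => ScarfInc d (σ, C)).card = 2 by
        rw [h]; exact even_two
      rw [card_eq_two]
      rw [hce] at hk
      refine ⟨(σ.erase a, C), (σ.erase b, C), ?_, ?_⟩
      · intro h
        have := congrArg Prod.fst h
        simp only at this
        have : b ∈ σ.erase b := by rw [← this]; simp [hb, hab.symm]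
        simp at this
      · ext d
        rw [key]
        simp only [mem_insert, mem_singleton]
        constructor
        · rintro (⟨x, hx, -, him, rfl⟩ | ⟨j, hj, hij, him, rfl⟩)
          · rcases (hk x hx).1 him with rfl | rfl <;> simp
          · exfalso
            have hji : j ≠ i₀ := by rintro rfl; exact hj hi
            have : j ∈ σ.image c := by rw [him]; simp [hji]
            rw [hce] at this
            simp [hj] at this
        · rintro (rfl | rfl)
          · exact Or.inl ⟨a, ha, hi, (hk a ha).2 (Or.inl rfl), rfl⟩
          · exact Or.inl ⟨b, hb, hi, (hk b hb).2 (Or.inr rfl), rfl⟩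
    · by_cases hex : ∃ j, j ∉ C ∧ σ.image c = (insert j C).erase i₀
      · obtain ⟨j, hj, him⟩ := hex
        have hji : j ≠ i₀ := by rintro rfl; exact hj hi
        have hinj : Set.InjOn c σ := card_image_iff.1 (by
          rw [him, card_erase_of_mem (by simp [hi]), card_insert_of_notMem hj]; omega)
        obtain ⟨x, hx, hxj⟩ : ∃ x ∈ σ, c x = j := by
          have : j ∈ σ.image c := by rw [him]; simp [hji]
          simpa using this
        suffices h : ((scarfDoors u c i₀).filter fun d => ScarfInc d (σ, C)).card = 2 by
          rw [h]; exact even_two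
        rw [card_eq_two]
        refine ⟨(σ.erase x, C), (σ, insert j C), ?_, ?_⟩
        · intro h
          have := congrArg Prod.fst h
          simp only [erase_eq_self] at this
          exact this hx
        · ext d
          rw [key]
          simp only [mem_insert, mem_singleton]
          constructor
          · rintro (⟨x', hx', -, him', rfl⟩ | ⟨j', hj', hij, him', rfl⟩)
            · left
              have : x = x' := by
                by_contra hne
                have : c x ∈ (σ.erase x').image c := mem_image_of_mem _ (by simp [hne, hx])
                rw [him', hxj] at this
                simp [hj] at this
              rw [this]
            · right
              have : j ∈ (insert j' C).erase i₀ := by rw [← him', him]; simp [hji]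
              have : j = j' := by simpa [hj, hji] using this
              rw [this]
          · rintro (rfl | rfl)
            · refine Or.inl ⟨x, hx, hi, ?_, rfl⟩
              ext i
              simp only [mem_image, mem_erase]
              have hmem : i ∈ σ.image c ↔ i ∈ (insert j C).erase i₀ := by rw [him]
              simp only [mem_image, mem_erase, mem_insert] at hmem
              constructor
              · rintro ⟨y, ⟨hyx, hy⟩, rfl⟩
                have h5 := hmem.1 ⟨y, hy, rfl⟩
                refine ⟨h5.1, h5.2.resolve_left fun h => hyx (hinj hy hx (h.trans hxj.symm))⟩
              · rintro ⟨hii, hiC⟩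
                obtain ⟨y, hy, hyi⟩ := hmem.2 ⟨hii, Or.inr hiC⟩
                refine ⟨y, ⟨?_, hy⟩, hyi⟩
                rintro rfl
                rw [← hyi, hxj] at hiC
                exact hj hiC
            · exact Or.inr ⟨j, hj, by simp [hi], him, rfl⟩
      · suffices h : ((scarfDoors u c i₀).filter fun d => ScarfInc d (σ, C)) = ∅ by
          rw [h]; simp
        rw [eq_empty_iff_forall_notMem]
        intro d
        rw [key]
        rintro (⟨x, hx, -, him, rfl⟩ | ⟨j, hj, hij, him, rfl⟩)
        · have himg : σ.image c = insert (c x) (C.erase i₀) := by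
            rw [← him, ← image_insert, insert_erase hx]
          by_cases h1 : c x ∈ C
          · by_cases h2 : c x = i₀
            · rw [h2, insert_erase hi] at himg
              exact hcol himg
            · rw [insert_eq_self.2 (by simp [h1, h2])] at himg
              exact hce himg
          · refine hex ⟨c x, h1, ?_⟩
            rw [himg, erase_insert_of_ne]
            rintro h
            rw [h] at h1
            exact h1 hi
        · exact hex ⟨j, hj, him⟩

/-- Scarf's combinatorial lemma: for every colouring there is a dominant pair `(σ, c(σ))`. -/
theorem scarf_lemma [Nonempty T] [Nonempty I] (u : I → T → ℕ) (hu : ∀ i, Injective (u i))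
    (c : T → I) : ∃ σ : Finset T, σ.Nonempty ∧ ScarfDominant u σ (σ.image c) := by
  classical
  obtain ⟨i₀⟩ := ‹Nonempty I›
  have hbd : ((∅, {i₀}) : Finset T × Finset I) ∈ scarfDoors u c i₀ := by
    refine mem_filter.2 ⟨mem_univ _, fun y => ⟨i₀, by simp, by simp⟩, by simp, by simp, by simp⟩
  -- every door other than `(∅, {i₀})` has two rooms, so the number of incidences is odd
  have hdc := sum_card_bipartiteAbove_eq_sum_card_bipartiteBelow
    (s := scarfDoors u c i₀) (t := scarfRooms u) (fun d r => ScarfInc d r)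
  have hodd : Odd (∑ d ∈ scarfDoors u c i₀, ((scarfRooms u).filter fun r => ScarfInc d r).card) := by
    rw [← add_sum_erase _ _ hbd, scarf_card_rooms_boundary u hu i₀]
    refine Odd.add_even odd_one (even_sum _ fun d hd => ?_)
    rw [mem_erase] at hd
    have hd2 := hd.2
    simp only [scarfDoors, mem_filter, mem_univ, true_and] at hd2
    obtain ⟨τ, D⟩ := d
    have hne : τ.Nonempty := by
      by_contra hne
      rw [not_nonempty_iff_eq_empty] at hne
      subst hne
      obtain ⟨j, hj⟩ := card_eq_one.1 (by simpa using hd2.2.1)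
      have h1 := hd2.2.2.1
      simp only [hj, mem_singleton] at h1
      exact hd.1 (by simp [hj, h1])
    rw [scarf_card_rooms u hu τ D hne hd2.2.1 hd2.1]
    exact even_two
  have hodd' : Odd (∑ r ∈ scarfRooms u, ((scarfDoors u c i₀).filter fun d => ScarfInc d r).card) := by
    simp only [bipartiteAbove, bipartiteBelow] at hdc
    rw [← hdc]
    exact hodd
  obtain ⟨r, hr, h⟩ : ∃ r ∈ scarfRooms u, r.1.image c = r.2 := by
    by_contra! hcon
    refine Nat.not_even_iff_odd.2 hodd' (even_sum _ fun r hr => ?_)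
    rw [← Nat.not_odd_iff_even, scarf_odd_doors u c i₀ r hr]
    exact hcon r hr
  simp only [scarfRooms, mem_filter, mem_univ, true_and] at hr
  refine ⟨r.1, ?_, h ▸ hr.1⟩
  obtain ⟨t⟩ := ‹Nonempty T›
  obtain ⟨i, hi, -⟩ := hr.1 t
  rw [← card_pos, hr.2]
  exact card_pos.2 ⟨i, hi⟩

end Scarf

/-! ### Brouwer's fixed point theorem -/

section Brouwer

open Finset

/-- A continuous self-map of the simplex has points that no coordinate of the image undershoots by
more than `ε`. The points of the grid of mesh `1 / N` are compared by their coordinates (ties being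
broken by an enumeration) and `x` is coloured by an index `i` with `x i ≤ f x i`; a dominant pair
`(σ, c(σ))` has small diameter, and the coordinates outside `c(σ)` are small on it. -/
lemma exists_approx_fixedPoint {I : Type*} [Fintype I] [Nonempty I]
    (f : stdSimplex ℝ I → stdSimplex ℝ I) (hf : Continuous f) {ε : ℝ} (hε : 0 < ε) :
    ∃ x : stdSimplex ℝ I, ∀ i, x.1 i ≤ (f x).1 i + ε := by
  classical
  have huc : UniformContinuous f := by
    have : CompactSpace (stdSimplex ℝ I) := isCompact_iff_compactSpace.1 (isCompact_stdSimplex ℝ I)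
    exact CompactSpace.uniformContinuous_of_continuous hf
  obtain ⟨δ, hδ, hfδ⟩ := Metric.uniformContinuous_iff.1 huc (ε / 2) (by positivity)
  obtain ⟨N, hN⟩ := exists_nat_gt ((Fintype.card I : ℝ) / min δ (ε / 2))
  have hmin : 0 < min δ (ε / 2) := by positivity
  have hN0 : (0 : ℝ) < N := lt_of_le_of_lt (by positivity) hN
  have hNδ : (Fintype.card I : ℝ) / N < min δ (ε / 2) := by
    rw [div_lt_iff₀ hmin] at hN
    rw [div_lt_iff₀ hN0]; linarith
  let T := {x : I → ℕ // x ∈ piAntidiag (univ : Finset I) N}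
  have hT : ∀ x : T, ∑ i, x.1 i = N := fun x => (mem_piAntidiag.1 x.2).1
  have mkT : ∀ x : I → ℕ, ∑ i, x i = N → x ∈ piAntidiag (univ : Finset I) N := fun x hx =>
    mem_piAntidiag.2 ⟨hx, by simp⟩
  obtain ⟨i₀⟩ := ‹Nonempty I›
  have : Nonempty I := ⟨i₀⟩
  have : Nonempty T := ⟨⟨Pi.single i₀ N, mkT _ (by simp)⟩⟩
  let e := Fintype.equivFin T
  let K := Fintype.card T
  let u : I → T → ℕ := fun i x => x.1 i * K + e x
  have hu : ∀ i, Function.Injective (u i) := by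
    intro i x y hxy
    have h := congrArg (· % K) hxy
    simp only [u, Nat.mul_add_mod_self_right] at h
    rw [Nat.mod_eq_of_lt (e x).2, Nat.mod_eq_of_lt (e y).2] at h
    exact e.injective (Fin.ext h)
  have hu_lt : ∀ i x y, x.1 i < y.1 i → u i x < u i y := by
    intro i x y hxy
    have h1 : (e x : ℕ) < K := (e x).2
    have h2 : (x.1 i + 1) * K ≤ y.1 i * K := Nat.mul_le_mul_right _ hxy
    simp only [u]
    linarith
  let pt : T → stdSimplex ℝ I := fun x => ⟨fun i => (x.1 i : ℝ) / N, fun i => by positivity, by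
    rw [← Finset.sum_div, ← Nat.cast_sum, hT]; exact div_self hN0.ne'⟩
  have hcol : ∀ x : T, ∃ i, (pt x).1 i ≤ (f (pt x)).1 i := by
    intro x
    by_contra! hcon
    have := Finset.sum_lt_sum_of_nonempty (univ_nonempty (α := I)) (fun i _ => hcon i)
    rw [(pt x).2.2, (f (pt x)).2.2] at this
    exact lt_irrefl _ this
  choose c hc using hcol
  obtain ⟨σ, hσ, hdom⟩ := scarf_lemma u hu c
  choose m hmσ hm using fun i => exists_min_image σ (fun x => x.1 i) hσ
  -- otherwise some grid point exceeds, in every coordinate of `c(σ)`, the minimum over `σ`,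
  -- contradicting dominance
  have hbig : N < ∑ i ∈ σ.image c, ((m i).1 i + 1) := by
    by_contra! hle
    obtain ⟨i₁, hi₁⟩ : (σ.image c).Nonempty := hσ.image c
    let s := N - ∑ i ∈ σ.image c, ((m i).1 i + 1)
    let y : I → ℕ := fun i => (if i ∈ σ.image c then (m i).1 i + 1 else 0) + if i = i₁ then s else 0
    have hy : ∑ i, y i = N := by
      simp only [y, sum_add_distrib, Finset.sum_ite_mem, univ_inter, Finset.sum_ite_eq',
        mem_univ, if_true]
      simp only [s, sum_add_distrib] at *
      omega
    obtain ⟨i, hi, h⟩ := hdom ⟨y, mkT y hy⟩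
    refine absurd (h (m i) (hmσ i)) (not_le.2 (hu_lt i _ _ ?_))
    simp only [y, if_pos hi]
    omega
  have hcardC : (σ.image c).card ≤ Fintype.card I := card_le_univ _
  have hsumC : ∀ x ∈ σ, ∑ i ∈ σ.image c, (x.1 i - (m i).1 i) + ∑ i ∈ univ \ σ.image c, x.1 i
      ≤ Fintype.card I := by
    intro x hx
    have h1 : ∑ i ∈ σ.image c, (x.1 i - (m i).1 i) + ∑ i ∈ σ.image c, (m i).1 i
        = ∑ i ∈ σ.image c, x.1 i := by
      rw [← sum_add_distrib]
      exact sum_congr rfl fun i _ => Nat.sub_add_cancel (hm i x hx)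
    have h2 := sum_sdiff (f := x.1) (subset_univ (σ.image c))
    rw [hT] at h2
    rw [sum_add_distrib] at hbig
    simp only [sum_const, smul_eq_mul, mul_one] at hbig
    omega
  have hin : ∀ x ∈ σ, ∀ i ∈ σ.image c, x.1 i ≤ (m i).1 i + Fintype.card I := by
    intro x hx i hi
    have := single_le_sum (f := fun i => x.1 i - (m i).1 i) (fun _ _ => Nat.zero_le _) hi
    have := hsumC x hx
    lia
  have hout : ∀ x ∈ σ, ∀ i, i ∉ σ.image c → x.1 i ≤ Fintype.card I := by
    intro x hx i hi
    have := single_le_sum (f := x.1) (fun _ _ => Nat.zero_le _)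
      (show i ∈ univ \ σ.image c by simpa using hi)
    have := hsumC x hx
    omega
  have hclose : ∀ x ∈ σ, ∀ y ∈ σ, ∀ i, x.1 i ≤ y.1 i + Fintype.card I := by
    intro x hx y hy i
    by_cases hi : i ∈ σ.image c
    · have := hin x hx i hi
      have := hm i y hy
      omega
    · have := hout x hx i hi
      omega
  have hcr : ∀ x ∈ σ, ∀ y ∈ σ, ∀ i, (pt x).1 i ≤ (pt y).1 i + Fintype.card I / N := by
    intro x hx y hy i
    simp only [pt]
    rw [← add_div]
    have : (x.1 i : ℝ) ≤ y.1 i + Fintype.card I := by exact_mod_cast hclose x hx y hy i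
    gcongr
  have hdist : ∀ x ∈ σ, ∀ y ∈ σ, dist (pt x) (pt y) < δ := by
    intro x hx y hy
    refine lt_of_le_of_lt ?_ (hNδ.trans_le (min_le_left _ _))
    rw [Subtype.dist_eq, dist_pi_le_iff (by positivity)]
    intro i
    rw [Real.dist_eq, abs_le]
    constructor <;> linarith [hcr x hx y hy i, hcr y hy x hx i]
  obtain ⟨x, hx⟩ := hσ
  have hNε := hNδ.trans_le (min_le_right _ _)
  refine ⟨pt x, fun i => ?_⟩
  by_cases hi : i ∈ σ.image c
  · obtain ⟨y, hy, rfl⟩ := mem_image.1 hi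
    have h1 := hc y
    have h2 := hcr x hx y hy (c y)
    have h3 := (dist_le_pi_dist (f (pt x)).1 (f (pt y)).1 (c y)).trans_lt (hfδ (hdist x hx y hy))
    rw [Real.dist_eq, abs_lt] at h3
    linarith [h3.1]
  · have h1 : (pt x).1 i ≤ Fintype.card I / N := by
      simp only [pt]
      have : (x.1 i : ℝ) ≤ Fintype.card I := by exact_mod_cast hout x hx i hi
      gcongr
    have h2 := (f (pt x)).2.1 i
    linarith

/-- Brouwer's fixed point theorem for the standard simplex. -/
theorem brouwer_stdSimplex {I : Type*} [Fintype I] [Nonempty I]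
    (f : stdSimplex ℝ I → stdSimplex ℝ I) (hf : Continuous f) : ∃ x, f x = x := by
  classical
  have : CompactSpace (stdSimplex ℝ I) := isCompact_iff_compactSpace.1 (isCompact_stdSimplex ℝ I)
  have hcl : ∀ ε : ℝ, IsClosed {x : stdSimplex ℝ I | ∀ i, x.1 i ≤ (f x).1 i + ε} := by
    intro ε
    simp only [Set.ofPred_forall]
    refine isClosed_iInter fun i => isClosed_le ?_ ?_
    · exact (continuous_apply i).comp continuous_subtype_val
    · exact ((continuous_apply i).comp (continuous_subtype_val.comp hf)).add continuous_const
  obtain ⟨x, hx⟩ := IsCompact.nonempty_iInter_of_sequence_nonempty_isCompact_isClosed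
    (fun n : ℕ => {x : stdSimplex ℝ I | ∀ i, x.1 i ≤ (f x).1 i + 1 / ((n : ℝ) + 1)})
    (fun n x hx i => (hx i).trans (by push_cast; gcongr; linarith))
    (fun n => exists_approx_fixedPoint f hf (by positivity))
    (hcl _).isCompact (fun n => hcl _)
  have hle : ∀ i, x.1 i ≤ (f x).1 i := by
    intro i
    refine le_of_tendsto_of_tendsto' (tendsto_const_nhds (x := x.1 i))
      ((tendsto_one_div_add_atTop_nhds_zero_nat (𝕜 := ℝ)).const_add ((f x).1 i)) (fun n => ?_) |>.trans
      (by simp)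
    exact Set.mem_iInter.1 hx n i
  refine ⟨x, Subtype.ext (funext fun i => ?_)⟩
  have := (Finset.sum_eq_sum_iff_of_le (s := univ) (fun i _ => hle i)).1
    (by rw [x.2.2, (f x).2.2])
  exact (this i (mem_univ i)).symm

end Brouwer

/-! ### Purification of fractional assignments -/

section Purify

open Set Filter Topology
open scoped ENNReal

variable {Ω S : Type*} [MeasurableSpace Ω]

/-- In a fixed enumeration of `S`, the first admissible label depends measurably on `ω`. -/
lemma exists_measurable_selection [Countable S] [Nonempty S] [MeasurableSpace S]
    {E : S → Set Ω} (hE : ∀ s, MeasurableSet (E s)) (hex : ∀ ω, ∃ s, ω ∈ E s) :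
    ∃ g : Ω → S, Measurable g ∧ ∀ ω, ω ∈ E (g ω) := by
  classical
  obtain ⟨φ, hφ⟩ := exists_surjective_nat S
  have hex' : ∀ ω, ∃ n, ω ∈ E (φ n) := fun ω => by
    obtain ⟨s, hs⟩ := hex ω
    obtain ⟨n, rfl⟩ := hφ s
    exact ⟨n, hs⟩
  exact ⟨fun ω => φ (Nat.find (hex' ω)), measurable_from_top.comp
    (measurable_find hex' fun n => hE _), fun ω => Nat.find_spec (hex' ω)⟩

/-- A fractional assignment of `Ω` to the points of `S`: `m s B` is the amount of `B` sent to `s`.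
It is finitely additive in `B`, sends nothing of `T s` to `s`, and has total amounts `x s`.
The values at non-measurable sets are normalised to `0`. -/
structure FracAssign (μ : Measure Ω) (T : S → Set Ω) (x : S → ℝ) (m : S → Set Ω → ℝ) : Prop where
  nonneg : ∀ s B, 0 ≤ m s B
  junk : ∀ s B, ¬ MeasurableSet B → m s B = 0
  add : ∀ s B C, MeasurableSet B → MeasurableSet C → Disjoint B C → m s (B ∪ C) = m s B + m s C
  sum_le : ∀ (F : Finset S) B, MeasurableSet B → ∑ s ∈ F, m s B ≤ μ.real B
  supp : ∀ s, m s (T s) = 0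
  tot : ∀ s, m s univ = x s

namespace FracAssign

variable {μ : Measure Ω} {T : S → Set Ω} {x : S → ℝ} {m : S → Set Ω → ℝ}

lemma empty (h : FracAssign μ T x m) (s : S) : m s ∅ = 0 := by
  have := h.add s ∅ ∅ .empty .empty (by simp)
  simp at this
  exact this

lemma le (h : FracAssign μ T x m) (s : S) {B : Set Ω} (hB : MeasurableSet B) :
    m s B ≤ μ.real B := by
  simpa using h.sum_le {s} B hB

lemma mono (h : FracAssign μ T x m) (s : S) {B C : Set Ω} (hB : MeasurableSet B)
    (hC : MeasurableSet C) (hBC : B ⊆ C) : m s B ≤ m s C := by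
  have := h.add s B (C \ B) hB (hC.diff hB) disjoint_sdiff_right
  rw [union_sdiff_cancel hBC] at this
  linarith [h.nonneg s (C \ B)]

lemma sum_range (h : FracAssign μ T x m) (s : S) {f : ℕ → Set Ω} (hf : ∀ i, MeasurableSet (f i))
    (hd : Pairwise (Function.onFun Disjoint f)) (n : ℕ) :
    m s (⋃ i ∈ Finset.range n, f i) = ∑ i ∈ Finset.range n, m s (f i) := by
  induction n with
  | zero => simp [h.empty]
  | succ n ih =>
    rw [Finset.sum_range_succ, ← ih, Finset.range_add_one, Finset.set_biUnion_insert, union_comm,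
      h.add s _ _ (Finset.measurableSet_biUnion _ fun i _ => hf i) (hf n)]
    rw [disjoint_iUnion₂_left]
    intro i hi
    exact hd (Finset.mem_range.1 hi).ne

/-- Finite additivity and domination by `μ` give countable additivity. -/
lemma hasSum [IsFiniteMeasure μ] (h : FracAssign μ T x m) (s : S) {f : ℕ → Set Ω}
    (hf : ∀ i, MeasurableSet (f i)) (hd : Pairwise (Function.onFun Disjoint f)) :
    HasSum (fun i => m s (f i)) (m s (⋃ i, f i)) := by
  rw [hasSum_iff_tendsto_nat_of_nonneg (fun i => h.nonneg s _)]
  have hmeas : ∀ n, MeasurableSet (⋃ i ∈ Finset.range n, f i) := fun n =>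
    Finset.measurableSet_biUnion _ fun i _ => hf i
  have hU : MeasurableSet (⋃ i, f i) := .iUnion hf
  have hsub : ∀ n, (⋃ i ∈ Finset.range n, f i) ⊆ ⋃ i, f i := fun n =>
    iUnion₂_subset fun i _ => subset_iUnion f i
  have hμ : Tendsto (fun n => ∑ i ∈ Finset.range n, μ.real (f i)) atTop (𝓝 (μ.real (⋃ i, f i))) := by
    have h1 : HasSum (fun i => μ.real (f i)) (μ.real (⋃ i, f i)) := by
      have h2 := measure_iUnion (μ := μ) hd hf
      simp only [Measure.real]
      rw [h2, ENNReal.tsum_toReal_eq fun i => measure_ne_top _ _]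
      exact ENNReal.hasSum_toReal (by rw [← h2]; exact measure_ne_top _ _)
    exact h1.tendsto_sum_nat
  have hlow : Tendsto (fun n => m s (⋃ i, f i) - (μ.real (⋃ i, f i) -
      ∑ i ∈ Finset.range n, μ.real (f i))) atTop (𝓝 (m s (⋃ i, f i))) := by
    have := (hμ.const_sub (μ.real (⋃ i, f i))).const_sub (m s (⋃ i, f i))
    simpa using this
  refine tendsto_of_tendsto_of_tendsto_of_le_of_le hlow tendsto_const_nhds (fun n => ?_) (fun n => ?_)
  · have h1 := h.add s _ _ (hmeas n) (hU.diff (hmeas n)) disjoint_sdiff_right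
    rw [union_sdiff_cancel (hsub n), h.sum_range s hf hd] at h1
    have h2 := h.le s (hU.diff (hmeas n))
    rw [measureReal_sdiff (hsub n) (hmeas n), measureReal_biUnion_finset
      (fun i _ j _ hij => hd hij) (fun i _ => hf i)] at h2
    simp only
    linarith
  · simp only
    rw [← h.sum_range s hf hd]
    exact h.mono s (hmeas n) hU (hsub n)

/-- The amount sent to `s`, as a measure on `Ω`. -/
lemma exists_measure [IsFiniteMeasure μ] (h : FracAssign μ T x m) (s : S) :
    ∃ M : Measure Ω, M ≤ μ ∧ ∀ B, MeasurableSet B → M B = ENNReal.ofReal (m s B) := by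
  let M : Measure Ω := Measure.ofMeasurable (fun B _ => ENNReal.ofReal (m s B)) (by simp [h.empty])
    (fun f hf hd => by
      have := h.hasSum s hf hd
      rw [← this.tsum_eq, ENNReal.ofReal_tsum_of_nonneg (fun i => h.nonneg s _) this.summable])
  have hM : ∀ B, MeasurableSet B → M B = ENNReal.ofReal (m s B) := fun B hB =>
    Measure.ofMeasurable_apply B hB
  refine ⟨M, Measure.le_iff.2 fun B hB => ?_, hM⟩
  rw [hM B hB, ENNReal.ofReal_le_iff_le_toReal (measure_ne_top _ _)]
  exact h.le s hB

end FracAssign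

/-- The conditions defining a fractional assignment are closed in the product topology, inside a
product of unit intervals. -/
lemma isCompact_fracAssign (μ : Measure Ω) [IsProbabilityMeasure μ] (T : S → Set Ω) (x : S → ℝ) :
    IsCompact {m | FracAssign μ T x m} := by
  have hsub : {m | FracAssign μ T x m} ⊆ pi univ fun _ : S => pi univ fun _ : Set Ω => Icc (0 : ℝ) 1 := by
    intro m hm s _ B _
    refine ⟨hm.nonneg s B, ?_⟩
    by_cases hB : MeasurableSet B
    · exact (hm.le s hB).trans measureReal_le_one
    · rw [hm.junk s B hB]; exact zero_le_one
  refine IsCompact.of_isClosed_subset (isCompact_univ_pi fun _ => isCompact_univ_pi fun _ =>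
    isCompact_Icc) ?_ hsub
  have hev : ∀ (s : S) (B : Set Ω), Continuous fun m : S → Set Ω → ℝ => m s B := fun s B =>
    (continuous_apply B).comp (continuous_apply s)
  have heq : {m | FracAssign μ T x m} =
      {m : S → Set Ω → ℝ | ∀ s B, 0 ≤ m s B} ∩
      {m | ∀ s B, ¬ MeasurableSet B → m s B = 0} ∩
      {m | ∀ s B C, MeasurableSet B → MeasurableSet C → Disjoint B C →
        m s (B ∪ C) = m s B + m s C} ∩
      {m | ∀ (F : Finset S) B, MeasurableSet B → ∑ s ∈ F, m s B ≤ μ.real B} ∩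
      {m | ∀ s, m s (T s) = 0} ∩ {m | ∀ s, m s univ = x s} := by
    ext m
    exact ⟨fun h => ⟨⟨⟨⟨⟨h.nonneg, h.junk⟩, h.add⟩, h.sum_le⟩, h.supp⟩, h.tot⟩,
      fun h => ⟨h.1.1.1.1.1, h.1.1.1.1.2, h.1.1.1.2, h.1.1.2, h.1.2, h.2⟩⟩
  rw [heq]
  simp only [Set.ofPred_forall]
  refine ((((IsClosed.inter ?_ ?_).inter ?_).inter ?_).inter ?_).inter ?_
  · exact isClosed_iInter fun s => isClosed_iInter fun B => isClosed_le continuous_const (hev s B)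
  · exact isClosed_iInter fun s => isClosed_iInter fun B => isClosed_iInter fun _ =>
      isClosed_eq (hev s B) continuous_const
  · exact isClosed_iInter fun s => isClosed_iInter fun B => isClosed_iInter fun C =>
      isClosed_iInter fun _ => isClosed_iInter fun _ => isClosed_iInter fun _ =>
      isClosed_eq (hev s _) ((hev s B).add (hev s C))
  · exact isClosed_iInter fun F => isClosed_iInter fun B => isClosed_iInter fun _ =>
      isClosed_le (continuous_finsetSum _ fun s _ => hev s B) continuous_const
  · exact isClosed_iInter fun s => isClosed_eq (hev s _) continuous_const
  · exact isClosed_iInter fun s => isClosed_eq (hev s _) continuous_const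

/-- Transferring a signed amount `h` of mass between two points yields again a fractional
assignment, provided that `h` is dominated by both shares and has total mass `0`. -/
lemma FracAssign.perturb {μ : Measure Ω} {T : S → Set Ω} {x : S → ℝ} {m : S → Set Ω → ℝ}
    [DecidableEq S] (hm : FracAssign μ T x m) {s t : S} (hst : s ≠ t) {h : Set Ω → ℝ}
    (hs : ∀ B, |h B| ≤ m s B) (ht : ∀ B, |h B| ≤ m t B)
    (hadd : ∀ B C, MeasurableSet B → MeasurableSet C → Disjoint B C → h (B ∪ C) = h B + h C)
    (huniv : h univ = 0) :
    FracAssign μ T x (fun r B => m r B + ((if r = s then h B else 0) - if r = t then h B else 0)) := by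
  have hnn : ∀ r B, 0 ≤ m r B + ((if r = s then h B else 0) - if r = t then h B else 0) := by
    intro r B
    have h1 := abs_le.1 (hs B)
    have h2 := abs_le.1 (ht B)
    split_ifs with h3 h4 h4
    · exact absurd (h3.symm.trans h4) hst
    · subst h3; linarith
    · subst h4; linarith
    · simpa using hm.nonneg r B
  have hz : ∀ r B, m r B = 0 → ((if r = s then h B else 0) - if r = t then h B else 0) = 0 := by
    intro r B hr
    split_ifs with h3 h4 h4
    · simp
    · subst h3; have := hs B; rw [hr] at this; simpa using this
    · subst h4; have := ht B; rw [hr] at this; simpa using this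
    · simp
  refine ⟨hnn, fun r B hB => ?_, fun r B C hB hC hd => ?_, fun F B hB => ?_, fun r => ?_, fun r => ?_⟩
  · rw [hz r B (hm.junk r B hB), hm.junk r B hB, add_zero]
  · rw [hm.add r B C hB hC hd, hadd B C hB hC hd]
    split_ifs <;> ring
  · -- enlarging the index set to contain both `s` and `t` makes the perturbation cancel
    calc _ ≤ ∑ r ∈ insert s (insert t F),
          (m r B + ((if r = s then h B else 0) - if r = t then h B else 0)) :=
        Finset.sum_le_sum_of_subset_of_nonneg (fun r hr => by simp [hr]) fun r _ _ => hnn r B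
      _ = ∑ r ∈ insert s (insert t F), m r B := by
        rw [Finset.sum_add_distrib, Finset.sum_sub_distrib]
        simp
      _ ≤ _ := hm.sum_le _ B hB
  · rw [hz r _ (hm.supp r), hm.supp r, add_zero]
  · rw [hm.tot r, huniv]; simp

/-- In an extreme fractional assignment over an atomless space, a set on which two different points
of `S` both receive at least the fraction `ε` is null: otherwise it splits into two parts of
positive measure, and exchanging mass between the two points in opposite directions on the two
parts writes the assignment as a midpoint of two others. -/
lemma FracAssign.extreme_disjoint {μ : Measure Ω} [IsProbabilityMeasure μ]
    (hatomless : AtomlessMeasure μ) {T : S → Set Ω} {x : S → ℝ} {m : S → Set Ω → ℝ}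
    (hm : m ∈ extremePoints ℝ {m | FracAssign μ T x m}) {s t : S} (hst : s ≠ t)
    {B : Set Ω} (hB : MeasurableSet B) {ε : ℝ} (hε : 0 < ε)
    (hs : ∀ C ⊆ B, MeasurableSet C → ε * μ.real C ≤ m s C)
    (ht : ∀ C ⊆ B, MeasurableSet C → ε * μ.real C ≤ m t C) : μ B = 0 := by
  classical
  by_contra hne
  obtain ⟨U, hUB, hU, hU0, hUlt⟩ := hatomless B hB (pos_iff_ne_zero.2 hne)
  have hfr : FracAssign μ T x m := hm.1
  have hV : MeasurableSet (B \ U) := hB.diff hU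
  have hV0 : 0 < μ (B \ U) := by
    rw [measure_sdiff hUB hU.nullMeasurableSet (measure_ne_top _ _)]
    exact tsub_pos_of_lt hUlt
  have hUr : 0 < μ.real U := ENNReal.toReal_pos hU0.ne' (measure_ne_top _ _)
  have hVr : 0 < μ.real (B \ U) := ENNReal.toReal_pos hV0.ne' (measure_ne_top _ _)
  -- the weights are chosen so that the transfers on `U` and on `B \ U` cancel in total
  let h : Set Ω → ℝ := fun A => if MeasurableSet A then
    ε * (μ.real (B \ U) * μ.real (A ∩ U) - μ.real U * μ.real (A ∩ (B \ U))) else 0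
  have hbound : ∀ A, MeasurableSet A → |h A| ≤ ε * μ.real (A ∩ B) := by
    intro A hA
    simp only [h, if_pos hA]
    rw [abs_mul, abs_of_pos hε]
    refine mul_le_mul_of_nonneg_left ?_ hε.le
    have h1 : μ.real (A ∩ U) ≤ μ.real (A ∩ B) := measureReal_mono (by gcongr)
    have h2 : μ.real (A ∩ (B \ U)) ≤ μ.real (A ∩ B) := measureReal_mono (by gcongr; exact sdiff_subset)
    have h3 : μ.real U ≤ 1 := measureReal_le_one
    have h4 : μ.real (B \ U) ≤ 1 := measureReal_le_one
    have h5 := measureReal_nonneg (μ := μ) (s := A ∩ U)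
    have h6 := measureReal_nonneg (μ := μ) (s := A ∩ (B \ U))
    rw [abs_le]
    constructor <;> nlinarith
  have hdom : ∀ r : S, (∀ C ⊆ B, MeasurableSet C → ε * μ.real C ≤ m r C) → ∀ A, |h A| ≤ m r A := by
    intro r hr A
    by_cases hA : MeasurableSet A
    · exact (hbound A hA).trans ((hr _ inter_subset_right (hA.inter hB)).trans
        (hfr.mono r (hA.inter hB) hA inter_subset_left))
    · simp only [h, if_neg hA, abs_zero]
      exact hfr.nonneg r A
  have hadd : ∀ A C, MeasurableSet A → MeasurableSet C → Disjoint A C → h (A ∪ C) = h A + h C := by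
    intro A C hA hC hd
    simp only [h, if_pos hA, if_pos hC, if_pos (hA.union hC)]
    rw [union_inter_distrib_right, union_inter_distrib_right,
      measureReal_union (hd.mono inter_subset_left inter_subset_left) (hC.inter hU),
      measureReal_union (hd.mono inter_subset_left inter_subset_left) (hC.inter hV)]
    ring
  have huniv : h univ = 0 := by simp only [h, if_pos MeasurableSet.univ, univ_inter]; ring
  have hp := hfr.perturb hst (hdom s hs) (hdom t ht) hadd huniv
  have hp' := hfr.perturb hst (h := fun A => -h A) (fun A => by rw [abs_neg]; exact hdom s hs A)
    (fun A => by rw [abs_neg]; exact hdom t ht A)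
    (fun A C hA hC hd => by rw [hadd A C hA hC hd]; ring) (by simp [huniv])
  have heq := hm.2 hp hp' ⟨1 / 2, 1 / 2, by norm_num, by norm_num, by norm_num, by
    funext r A
    simp only [Pi.add_apply, Pi.smul_apply, smul_eq_mul]
    split_ifs <;> ring⟩
  have := congrFun (congrFun heq s) U
  simp only [if_true, if_neg hst, sub_zero, add_eq_left] at this
  simp only [h, if_pos hU, inter_self] at this
  rw [show U ∩ (B \ U) = ∅ by simp, measureReal_empty] at this
  have hpos : 0 < ε * (μ.real (B \ U) * μ.real U - μ.real U * 0) := by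
    rw [mul_zero, sub_zero]; positivity
  exact absurd this (ne_of_gt hpos)

/-- Purification: over an atomless space a fractional assignment to a countable set can be replaced
by a genuine map with the same distribution and the same support constraints. -/
theorem FracAssign.purify [Countable S] [MeasurableSpace S] [MeasurableSingletonClass S]
    {μ : Measure Ω} [IsProbabilityMeasure μ] (hatomless : AtomlessMeasure μ) {T : S → Set Ω}
    (hT : ∀ s, MeasurableSet (T s)) {x : Measure S} [IsProbabilityMeasure x] {m₀ : S → Set Ω → ℝ}
    (hm₀ : FracAssign μ T (fun s => x.real {s}) m₀) :
    ∃ g : Ω → S, Measurable g ∧ (∀ᵐ ω ∂μ, ω ∉ T (g ω)) ∧ x = μ.map g := by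
  classical
  obtain ⟨m, hm⟩ := (isCompact_fracAssign μ T (fun s => x.real {s})).extremePoints_nonempty ⟨m₀, hm₀⟩
  have hfr : FracAssign μ T (fun s => x.real {s}) m := hm.1
  choose M hMμ hM using fun s => hfr.exists_measure s
  have hMac : ∀ s, M s ≪ μ := fun s => Measure.absolutelyContinuous_of_le (hMμ s)
  have hMfin : ∀ s, IsFiniteMeasure (M s) := fun s => isFiniteMeasure_of_le μ (hMμ s)
  let d : S → Ω → ℝ≥0∞ := fun s => (M s).rnDeriv μ
  have hd : ∀ s, Measurable (d s) := fun s => Measure.measurable_rnDeriv _ _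
  have hMd : ∀ s B, MeasurableSet B → M s B = ∫⁻ ω in B, d s ω ∂μ := by
    intro s B hB
    rw [← withDensity_apply _ hB, Measure.withDensity_rnDeriv_eq _ _ (hMac s)]
  let E : S → Set Ω := fun s => {ω | d s ω ≠ 0}
  have hE : ∀ s, MeasurableSet (E s) := fun s => (hd s) (measurableSet_singleton 0).compl
  have hMc : ∀ s, M s (E s)ᶜ = 0 := by
    intro s
    rw [hMd s _ (hE s).compl, setLIntegral_eq_zero_iff (hE s).compl (hd s)]
    exact .of_forall fun ω hω => by simpa [E] using hω
  have hEx : ∀ s, x {s} ≤ μ (E s) := by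
    intro s
    have h1 : M s univ = x {s} := by
      rw [hM s _ .univ, hfr.tot s, ofReal_measureReal]
    rw [← h1, ← measure_add_measure_compl (hE s), hMc s, add_zero]
    exact hMμ s _
  have hET : ∀ s, μ (E s ∩ T s) = 0 := by
    intro s
    have h1 : M s (T s) = 0 := by rw [hM s _ (hT s), hfr.supp s, ENNReal.ofReal_zero]
    rw [hMd s _ (hT s), setLIntegral_eq_zero_iff (hT s) (hd s)] at h1
    refine measure_mono_null ?_ (ae_iff.1 h1)
    rintro ω ⟨h2, h3⟩
    simpa using ⟨h3, h2⟩
  have hdisj : ∀ s t, s ≠ t → μ (E s ∩ E t) = 0 := by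
    intro s t hst
    have hsub : E s ∩ E t ⊆ ⋃ n : ℕ, {ω | ((n : ℝ≥0∞) + 1)⁻¹ < d s ω} ∩ {ω | ((n : ℝ≥0∞) + 1)⁻¹ < d t ω} := by
      rintro ω ⟨h1, h2⟩
      obtain ⟨n, hn⟩ := ENNReal.exists_inv_nat_lt (a := min (d s ω) (d t ω))
        (by simp only [E, mem_ofPred_eq] at h1 h2; simp [h1, h2])
      have hle : ((n : ℝ≥0∞) + 1)⁻¹ ≤ (n : ℝ≥0∞)⁻¹ := ENNReal.inv_le_inv.2 le_self_add
      rw [lt_min_iff] at hn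
      exact mem_iUnion.2 ⟨n, hle.trans_lt hn.1, hle.trans_lt hn.2⟩
    refine measure_mono_null hsub (measure_iUnion_null fun n => ?_)
    have hB : MeasurableSet ({ω | ((n : ℝ≥0∞) + 1)⁻¹ < d s ω} ∩ {ω | ((n : ℝ≥0∞) + 1)⁻¹ < d t ω}) :=
      (measurableSet_lt measurable_const (hd s)).inter (measurableSet_lt measurable_const (hd t))
    have hlow : ∀ r (C : Set Ω), MeasurableSet C → (∀ ω ∈ C, ((n : ℝ≥0∞) + 1)⁻¹ < d r ω) →
        ((n : ℝ) + 1)⁻¹ * μ.real C ≤ m r C := by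
      intro r C hC h
      have h1 : ((n : ℝ≥0∞) + 1)⁻¹ * μ C ≤ M r C := by
        rw [hMd r C hC, ← setLIntegral_const]
        exact setLIntegral_mono (hd r) fun ω hω => (h ω hω).le
      rw [hM r C hC] at h1
      have h2 := ENNReal.toReal_mono ENNReal.ofReal_ne_top h1
      rw [ENNReal.toReal_mul, ENNReal.toReal_ofReal (hfr.nonneg r C), ENNReal.toReal_inv,
        ENNReal.toReal_add (by simp) (by simp)] at h2
      simpa [Measure.real] using h2
    exact FracAssign.extreme_disjoint hatomless hm hst hB (ε := ((n : ℝ) + 1)⁻¹) (by positivity)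
      (fun C hC hCm => hlow s C hCm fun ω hω => (hC hω).1)
      (fun C hC hCm => hlow t C hCm fun ω hω => (hC hω).2)
  have hcover : μ (⋃ s, E s)ᶜ = 0 := by
    rw [prob_compl_eq_zero_iff (.iUnion hE)]
    refine le_antisymm prob_le_one ?_
    rw [measure_iUnion₀ (fun s t hst => hdisj s t hst) fun s => (hE s).nullMeasurableSet]
    calc (1 : ℝ≥0∞) = x univ := measure_univ.symm
      _ = ∑' s, x {s} := by
        rw [← Measure.tsum_indicator_apply_singleton x univ .univ]; simp
      _ ≤ _ := ENNReal.tsum_le_tsum hEx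
  have hSne : Nonempty S := by
    by_contra hS
    rw [not_nonempty_iff] at hS
    have := measure_univ (μ := x)
    rw [univ_eq_empty_iff.2 hS] at this
    simp at this
  -- the sets `E s` partition `Ω` up to null sets, and the label of the cell is the map sought
  obtain ⟨g, hg, hgE'⟩ := exists_measurable_selection (E := fun s => E s ∪ (⋃ t, E t)ᶜ)
    (fun s => (hE s).union (MeasurableSet.iUnion hE).compl) (fun ω => by
      by_cases hω : ω ∈ ⋃ s, E s
      · exact (mem_iUnion.1 hω).imp fun s hs => Or.inl hs
      · exact ⟨Classical.arbitrary S, Or.inr hω⟩)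
  have hgE : ∀ ω ∈ ⋃ s, E s, ω ∈ E (g ω) := fun ω hω => (hgE' ω).resolve_right fun h => h hω
  have hcov' : ∀ᵐ ω ∂μ, ω ∈ E (g ω) := by
    refine measure_mono_null ?_ hcover
    intro ω hω h
    exact hω (hgE ω h)
  refine ⟨g, hg, ?_, ?_⟩
  · have : ∀ᵐ ω ∂μ, ∀ s, ω ∉ E s ∩ T s := ae_all_iff.2 fun s => measure_eq_zero_iff_ae_notMem.1 (hET s)
    filter_upwards [this, hcov'] with ω h1 h2 h3
    exact h1 _ ⟨h2, h3⟩
  · have : IsProbabilityMeasure (μ.map g) := Measure.isProbabilityMeasure_map hg.aemeasurable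
    -- an inequality between probability measures is an equality
    refine Measure.eq_of_le_of_isProbabilityMeasure (Measure.le_iff.2 fun C hC => ?_)
    rw [← Measure.tsum_indicator_apply_singleton x C hC, ← Measure.tsum_indicator_apply_singleton _ C hC]
    refine ENNReal.tsum_le_tsum fun s => indicator_le_indicator ?_
    rw [Measure.map_apply hg (measurableSet_singleton s)]
    refine (hEx s).trans (measure_mono_ae ?_)
    have h1 : ∀ᵐ ω ∂μ, ∀ t, s ≠ t → ω ∉ E s ∩ E t := ae_all_iff.2 fun t => by
      by_cases hst : s = t
      · simp [hst]
      · simpa [hst] using measure_eq_zero_iff_ae_notMem.1 (hdisj s t hst)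
    filter_upwards [h1, hcov'] with ω h1 h2 h3
    by_contra hne
    exact h1 (g ω) (fun h => hne h.symm) ⟨h3, h2⟩

end Purify

/-! ### Limits of couplings -/

section Limit

open Set Filter Topology
open scoped ENNReal

variable {Ω S : Type*} [MeasurableSpace Ω]

/-- The radii `1 / (k + 1)` shrink to `0`. -/
noncomputable def shrinkRadius (k : ℕ) : ℝ := 1 / ((k : ℝ) + 1)

lemma shrinkRadius_pos (k : ℕ) : 0 < shrinkRadius k := by
  unfold shrinkRadius; positivity

lemma shrinkRadius_antitone : Antitone shrinkRadius := fun k l hkl => by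
  unfold shrinkRadius; gcongr

lemma tendsto_shrinkRadius : Tendsto shrinkRadius atTop (𝓝 0) :=
  tendsto_one_div_add_atTop_nhds_zero_nat

lemma tendsto_measureReal_closedBall [MetricSpace S] [MeasurableSpace S] [BorelSpace S]
    (x : Measure S) [IsProbabilityMeasure x] (s : S) :
    Tendsto (fun k => x.real (Metric.closedBall s (shrinkRadius k))) atTop (𝓝 (x.real {s})) := by
  have h := tendsto_measure_iInter_atTop (μ := x)
    (s := fun k => Metric.closedBall s (shrinkRadius k))
    (fun k => Metric.isClosed_closedBall.measurableSet.nullMeasurableSet)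
    (fun k l hkl => Metric.closedBall_subset_closedBall (shrinkRadius_antitone hkl))
    ⟨0, measure_ne_top _ _⟩
  have hI : ⋂ k, Metric.closedBall s (shrinkRadius k) = {s} := by
    ext t
    simp only [mem_iInter, Metric.mem_closedBall, mem_singleton_iff]
    refine ⟨fun ht => ?_, fun ht k => by simp [ht, (shrinkRadius_pos k).le]⟩
    exact dist_le_zero.1 (ge_of_tendsto' tendsto_shrinkRadius ht)
  rw [hI] at h
  exact (ENNReal.tendsto_toReal_iff (fun _ => measure_ne_top _ _) (measure_ne_top _ _)).2 h

/-- Couplings of `μ` with a weakly convergent sequence of laws on a countable space, asymptotically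
carried by the graph of `F`, produce in the limit an `F`-selection having the limit law. The mass
`m s B` sent from `B` to `s` in the limiting fractional assignment is obtained as a limit of the
masses of `B ×ˢ ball s r`, first along an ultrafilter and then as `r → 0`. -/
theorem exists_selection_of_tendsto [MetricSpace S] [Countable S] [MeasurableSpace S]
    [BorelSpace S] {μ : Measure Ω} [IsProbabilityMeasure μ] (hatomless : AtomlessMeasure μ)
    {F : Ω → Set S} (hFcl : ∀ ω, IsClosed (F ω))
    (hFm : ∀ C, IsClosed C → MeasurableSet {ω | (F ω ∩ C).Nonempty})
    {γ : ℕ → Measure (Ω × S)} {xs : ℕ → ProbabilityMeasure S} {x : ProbabilityMeasure S}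
    (hfst : ∀ n, (γ n).map Prod.fst = μ) (hsnd : ∀ n, (γ n).map Prod.snd = xs n)
    (hx : Tendsto xs atTop (𝓝 x))
    (hF : ∀ C, IsClosed C →
      Tendsto (fun n => (γ n).real ({ω | ¬ (F ω ∩ C).Nonempty} ×ˢ C)) atTop (𝓝 0)) :
    ∃ g : Ω → S, Measurable g ∧ (∀ᵐ ω ∂μ, g ω ∈ F ω) ∧ (x : Measure S) = μ.map g := by
  classical
  have hpr : ∀ n, IsProbabilityMeasure (γ n) := fun n => by
    refine ⟨?_⟩
    have := congrArg (fun ν => ν univ) (hfst n)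
    simpa [Measure.map_apply measurable_fst] using this
  let U : Ultrafilter ℕ := hyperfilter ℕ
  have hU : (U : Filter ℕ) ≤ atTop := Nat.hyperfilter_le_atTop
  let B (s : S) (k : ℕ) : Set S := Metric.ball s (shrinkRadius k)
  let K (s : S) (k : ℕ) : Set S := Metric.closedBall s (shrinkRadius k)
  have hBm : ∀ s k, MeasurableSet (B s k) := fun s k => Metric.isOpen_ball.measurableSet
  have hKc : ∀ s k, IsClosed (K s k) := fun s k => Metric.isClosed_closedBall
  have hBK : ∀ s k, B s k ⊆ K s k := fun s k => Metric.ball_subset_closedBall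
  have hfst' : ∀ n {E : Set Ω}, MeasurableSet E → (γ n).real (E ×ˢ univ) = μ.real E := by
    intro n E hE
    rw [← hfst n, map_measureReal_apply measurable_fst hE, prod_univ]
  have hlim : ∀ s k E, ∃ l, 0 ≤ l ∧ Tendsto (fun n => (γ n).real (E ×ˢ B s k)) U (𝓝 l) := by
    intro s k E
    obtain ⟨l, hl, hle⟩ := (isCompact_Icc (a := (0 : ℝ)) (b := 1)).ultrafilter_le_nhds'
      (U.map fun n => (γ n).real (E ×ˢ B s k))
      (Filter.mem_map.2 (Filter.Eventually.of_forall (f := (U : Filter ℕ)) fun n => ⟨measureReal_nonneg, measureReal_le_one⟩))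
    exact ⟨l, hl.1, hle⟩
  choose L hL0 hL using hlim
  have hLanti : ∀ s E, Antitone fun k => L s k E := fun s E k l hkl =>
    le_of_tendsto_of_tendsto' (hL s l E) (hL s k E) fun n => measureReal_mono
      (prod_mono_right (Metric.ball_subset_ball (shrinkRadius_antitone hkl)))
  let m : S → Set Ω → ℝ := fun s E => if MeasurableSet E then ⨅ k, L s k E else 0
  have hm : ∀ s E, MeasurableSet E → Tendsto (fun k => L s k E) atTop (𝓝 (m s E)) := by
    intro s E hE
    simp only [m, if_pos hE]
    exact tendsto_atTop_ciInf (hLanti s E) ⟨0, by rintro _ ⟨k, rfl⟩; exact hL0 s k E⟩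
  have hTset : ∀ s, {ω | s ∉ F ω} = {ω | ¬ (F ω ∩ {s}).Nonempty} := fun s => by
    ext ω; simp
  have hTm : ∀ s, MeasurableSet {ω | s ∉ F ω} := fun s => by
    rw [hTset]; exact (hFm _ isClosed_singleton).compl
  have hfr : FracAssign μ (fun s => {ω | s ∉ F ω}) (fun s => (x : Measure S).real {s}) m := by
    refine ⟨fun s E => ?_, fun s E hE => if_neg hE, fun s E E' hE hE' hd => ?_, fun I E hE => ?_,
      fun s => ?_, fun s => ?_⟩
    · by_cases hE : MeasurableSet E
      · exact ge_of_tendsto' (hm s E hE) fun k => hL0 s k E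
      · simp [m, hE]
    · refine tendsto_nhds_unique (hm s _ (hE.union hE')) ?_
      refine ((hm s E hE).add (hm s E' hE')).congr fun k => ?_
      refine tendsto_nhds_unique ?_ (hL s k (E ∪ E'))
      refine ((hL s k E).add (hL s k E')).congr fun n => ?_
      rw [union_prod, measureReal_union (hd.set_prod_left _ _) (hE'.prod (hBm s k))]
    · refine le_of_tendsto (tendsto_finsetSum I fun s _ => hm s E hE) ?_
      -- for small radii the balls around the points of `I` are disjoint
      have hsep : ∀ᶠ k in atTop, ∀ s ∈ I, ∀ t ∈ I, s ≠ t → Disjoint (B s k) (B t k) := by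
        refine (Finset.eventually_all I).2 fun s _ => (Finset.eventually_all I).2 fun t _ => ?_
        by_cases hst : s = t
        · exact .of_forall fun k h => absurd hst h
        · have h2 : Tendsto (fun k => shrinkRadius k + shrinkRadius k) atTop (𝓝 0) := by
            simpa using tendsto_shrinkRadius.add tendsto_shrinkRadius
          filter_upwards [h2.eventually_le_const (dist_pos.2 hst)] with k hk _
          exact Metric.ball_disjoint_ball hk
      filter_upwards [hsep] with k hk
      refine le_of_tendsto' (tendsto_finsetSum I fun s _ => hL s k E) fun n => ?_
      rw [← measureReal_biUnion_finset (fun s hs t ht hst => (hk s hs t ht hst).set_prod_right _ _)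
        (fun s _ => hE.prod (hBm s k)), ← hfst' n hE]
      exact measureReal_mono (iUnion₂_subset fun s _ => prod_mono_right (subset_univ _))
    · have hmT := hm s _ (hTm s)
      let Tk (k : ℕ) : Set Ω := {ω | ¬ (F ω ∩ K s k).Nonempty}
      have hTk : ∀ k, MeasurableSet (Tk k) := fun k => (hFm _ (hKc s k)).compl
      have hdiff : Tendsto (fun k => μ.real ({ω | s ∉ F ω} \ Tk k)) atTop (𝓝 0) := by
        have h := tendsto_measure_iInter_atTop (μ := μ) (s := fun k => {ω | s ∉ F ω} \ Tk k)
          (fun k => ((hTm s).diff (hTk k)).nullMeasurableSet)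
          (fun k l hkl ω hω => ⟨hω.1, fun h => hω.2 fun h' => h (h'.mono (inter_subset_inter_right _
            (Metric.closedBall_subset_closedBall (shrinkRadius_antitone hkl))))⟩)
          ⟨0, measure_ne_top _ _⟩
        have hI : ⋂ k, {ω | s ∉ F ω} \ Tk k = ∅ := by
          refine eq_empty_of_forall_notMem fun ω hω => ?_
          rw [mem_iInter] at hω
          refine (hω 0).1 ((hFcl ω).closure_subset_iff.2 subset_rfl ?_)
          refine Metric.mem_closure_iff.2 fun ε hε => ?_
          obtain ⟨k, hk⟩ := (tendsto_shrinkRadius.eventually_lt_const hε).exists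
          obtain ⟨t, ht, htK⟩ := not_not.1 (hω k).2
          exact ⟨t, ht, by rw [dist_comm]; exact (Metric.mem_closedBall.1 htK).trans_lt hk⟩
        rw [hI] at h
        have h' := (ENNReal.tendsto_toReal_iff (fun _ => measure_ne_top _ _)
          (measure_ne_top _ _)).2 h
        simpa [Measure.real] using h'
      refine le_antisymm (le_of_tendsto_of_tendsto' hmT hdiff fun k => ?_)
        (ge_of_tendsto' hmT fun k => hL0 s k _)
      have hlim : Tendsto (fun n => (γ n).real (Tk k ×ˢ K s k) + μ.real ({ω | s ∉ F ω} \ Tk k)) U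
          (𝓝 (0 + μ.real ({ω | s ∉ F ω} \ Tk k))) :=
        ((hF _ (hKc s k)).mono_left hU).add_const _
      rw [zero_add] at hlim
      refine le_of_tendsto_of_tendsto' (hL s k _) hlim fun n => ?_
      rw [← hfst' n ((hTm s).diff (hTk k))]
      refine (measureReal_mono ?_).trans (measureReal_union_le _ _)
      rintro ⟨ω, t⟩ ⟨h1, h2⟩
      by_cases hω : ω ∈ Tk k
      · exact Or.inl ⟨hω, hBK s k h2⟩
      · exact Or.inr ⟨⟨h1, hω⟩, trivial⟩
    · have hsnd' : ∀ n {E : Set S}, MeasurableSet E →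
          (γ n).real (univ ×ˢ E) = (xs n : Measure S).real E := by
        intro n E hE
        rw [← hsnd n, map_measureReal_apply measurable_snd hE, univ_prod]
      have hxU : Tendsto xs U (𝓝 x) := hx.mono_left hU
      have hLe : ∀ k, Tendsto (fun n => (xs n : Measure S) (B s k)) U
          (𝓝 (ENNReal.ofReal (L s k univ))) := fun k => by
        refine (ENNReal.tendsto_ofReal (hL s k univ)).congr fun n => ?_
        rw [hsnd' n (hBm s k), ofReal_measureReal]
      refine tendsto_nhds_unique (hm s univ .univ) ?_
      refine tendsto_of_tendsto_of_tendsto_of_le_of_le tendsto_const_nhds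
        (tendsto_measureReal_closedBall (x : Measure S) s) (fun k => ?_) (fun k => ?_)
      · have h := ProbabilityMeasure.le_liminf_measure_open_of_tendsto hxU
          (G := B s k) Metric.isOpen_ball
        rw [(hLe k).liminf_eq] at h
        refine ENNReal.toReal_le_of_le_ofReal (hL0 s k univ) (le_trans (measure_mono ?_) h)
        exact singleton_subset_iff.2 (Metric.mem_ball_self (shrinkRadius_pos k))
      · have h := ProbabilityMeasure.limsup_measure_closed_le_of_tendsto hxU (hKc s k)
        have h2 : ENNReal.ofReal (L s k univ) ≤ (x : Measure S) (K s k) := by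
          rw [← (hLe k).limsup_eq]
          exact (limsup_le_limsup (.of_forall fun n => measure_mono (hBK s k))).trans h
        exact (ENNReal.ofReal_le_iff_le_toReal (measure_ne_top _ _)).1 h2
  obtain ⟨g, hg, hgF, hgx⟩ := hfr.purify hatomless hTm
  exact ⟨g, hg, hgF.mono fun ω hω => not_not.1 hω, hgx⟩

end Limit

/-! ### Finite mixtures of laws -/

section Mixtures

open Set Filter Topology
open scoped ENNReal

variable {Ω S : Type*} [MeasurableSpace Ω]

lemma stdSimplex_sum_ofReal {J : Type*} [Fintype J] (w : stdSimplex ℝ J) :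
    ∑ j, ENNReal.ofReal (w.1 j) = 1 := by
  rw [← ENNReal.ofReal_sum_of_nonneg fun j _ => w.2.1 j, w.2.2, ENNReal.ofReal_one]

/-- The mixture of finitely many laws with weights `w`. -/
noncomputable def mixLaw [MeasurableSpace S] {J : Type*} [Fintype J] (w : stdSimplex ℝ J)
    (y : J → ProbabilityMeasure S) : ProbabilityMeasure S :=
  ⟨∑ j, ENNReal.ofReal (w.1 j) • (y j : Measure S), ⟨by
    simp [Measure.finsetSum_apply, stdSimplex_sum_ofReal]⟩⟩

lemma continuous_mixLaw [MeasurableSpace S] [TopologicalSpace S] [OpensMeasurableSpace S]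
    {J : Type*} [Fintype J] (y : J → ProbabilityMeasure S) :
    Continuous fun w : stdSimplex ℝ J => mixLaw w y := by
  rw [continuous_iff_continuousAt]
  intro w
  rw [ContinuousAt, ProbabilityMeasure.tendsto_iff_forall_integral_tendsto]
  intro f
  have h : ∀ v : stdSimplex ℝ J, ∫ s, f s ∂(mixLaw v y : Measure S) =
      ∑ j, v.1 j * ∫ s, f s ∂(y j : Measure S) := by
    intro v
    change ∫ s, f s ∂(∑ j, ENNReal.ofReal (v.1 j) • (y j : Measure S)) = _
    rw [integral_finsetSum_measure]
    · refine Finset.sum_congr rfl fun j _ => ?_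
      rw [integral_smul_measure, ENNReal.toReal_ofReal (v.2.1 j), smul_eq_mul]
    · exact fun j _ => (f.integrable _).smul_measure ENNReal.ofReal_ne_top
  simp only [h]
  have hc : Continuous fun v : stdSimplex ℝ J => ∑ j, v.1 j * ∫ s, f s ∂(y j : Measure S) :=
    continuous_finsetSum _ fun j _ =>
      ((continuous_apply j).comp continuous_subtype_val).mul continuous_const
  exact hc.tendsto w

/-- The limit law of mixtures of laws of maps that are asymptotically `F`-valued is the law of a
selection of `F`: randomising over the maps gives couplings asymptotically carried by the graph of
`F`. -/
theorem exists_selection_of_mixLaw [MetricSpace S] [Countable S] [MeasurableSpace S]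
    [BorelSpace S] {μ : Measure Ω} [IsProbabilityMeasure μ] (hatomless : AtomlessMeasure μ)
    {F : Ω → Set S} (hFcl : ∀ ω, IsClosed (F ω))
    (hFm : ∀ C, IsClosed C → MeasurableSet {ω | (F ω ∩ C).Nonempty})
    {J : ℕ → Type*} [∀ n, Fintype (J n)] {w : ∀ n, stdSimplex ℝ (J n)}
    {y : ∀ n, J n → ProbabilityMeasure S} {G : ∀ n, J n → Ω → S} {x : ProbabilityMeasure S}
    (hG : ∀ n j, Measurable (G n j)) (hy : ∀ n j, (y n j : Measure S) = μ.map (G n j))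
    (hx : Tendsto (fun n => mixLaw (w n) (y n)) atTop (𝓝 x))
    (hF : ∀ C, IsClosed C → ∀ᵐ ω ∂μ, ¬ (F ω ∩ C).Nonempty →
      ∀ᶠ n in atTop, ∀ j, 0 < (w n).1 j → G n j ω ∉ C) :
    ∃ g : Ω → S, Measurable g ∧ (∀ᵐ ω ∂μ, g ω ∈ F ω) ∧ (x : Measure S) = μ.map g := by
  let γ (n : ℕ) : Measure (Ω × S) :=
    ∑ j, ENNReal.ofReal ((w n).1 j) • μ.map (fun ω => (ω, G n j ω))
  have hgr : ∀ n j, Measurable fun ω => (ω, G n j ω) := fun n j => measurable_id.prodMk (hG n j)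
  have hγ : ∀ n {E : Set (Ω × S)}, MeasurableSet E →
      γ n E = ∑ j, ENNReal.ofReal ((w n).1 j) * μ ((fun ω => (ω, G n j ω)) ⁻¹' E) := by
    intro n E hE
    simp only [γ, Measure.finsetSum_apply, Measure.smul_apply, smul_eq_mul]
    exact Finset.sum_congr rfl fun j _ => by rw [Measure.map_apply (hgr n j) hE]
  refine exists_selection_of_tendsto hatomless hFcl hFm (γ := γ) (fun n => ?_) (fun n => ?_) hx
    fun C hC => ?_
  · ext E hE
    rw [Measure.map_apply measurable_fst hE, hγ n (measurable_fst hE)]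
    simp only [← preimage_comp, Function.comp_def, preimage_id']
    rw [← Finset.sum_mul, stdSimplex_sum_ofReal, one_mul]
  · ext E hE
    rw [Measure.map_apply measurable_snd hE, hγ n (measurable_snd hE)]
    change _ = (∑ j, ENNReal.ofReal ((w n).1 j) • (y n j : Measure S)) E
    simp only [Measure.finsetSum_apply, Measure.smul_apply, smul_eq_mul]
    exact Finset.sum_congr rfl fun j _ => by rw [hy n j, Measure.map_apply (hG n j) hE]; rfl
  · let bad (n : ℕ) : Set Ω := {ω | ¬ (F ω ∩ C).Nonempty} ∩
      ⋃ j, ⋃ _ : 0 < (w n).1 j, G n j ⁻¹' C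
    have hbm : ∀ n, MeasurableSet (bad n) := fun n => (hFm C hC).compl.inter
      (.iUnion fun j => .iUnion fun _ => hG n j hC.measurableSet)
    have hle : ∀ n, γ n ({ω | ¬ (F ω ∩ C).Nonempty} ×ˢ C) ≤ μ (bad n) := by
      intro n
      have hTC : MeasurableSet {ω | ¬ (F ω ∩ C).Nonempty} := (hFm C hC).compl
      rw [hγ n (hTC.prod hC.measurableSet)]
      calc _ ≤ ∑ j, ENNReal.ofReal ((w n).1 j) * μ (bad n) := by
            refine Finset.sum_le_sum fun j _ => ?_
            rcases (w n).2.1 j |>.eq_or_lt with h0 | h0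
            · simp [← h0]
            · gcongr
              rintro ω ⟨h1, h2⟩
              exact ⟨h1, mem_iUnion₂.2 ⟨j, h0, h2⟩⟩
        _ = μ (bad n) := by rw [← Finset.sum_mul, stdSimplex_sum_ofReal, one_mul]
    have hbad : Tendsto (fun n => μ (bad n)) atTop (𝓝 0) := by
      have h := tendsto_measure_of_ae_tendsto_indicator_of_isFiniteMeasure (μ := μ) (A := ∅)
        (As := bad) atTop .empty hbm (by
          filter_upwards [hF C hC] with ω hω
          by_cases h1 : (F ω ∩ C).Nonempty
          · exact .of_forall fun n => by simp [bad, h1]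
          · filter_upwards [hω h1] with n hn
            simpa [bad, h1] using hn)
      simpa using h
    have h2 : Tendsto (fun n => γ n ({ω | ¬ (F ω ∩ C).Nonempty} ×ˢ C)) atTop (𝓝 0) :=
      tendsto_of_tendsto_of_tendsto_of_le_of_le tendsto_const_nhds hbad (fun _ => zero_le) hle
    simpa [Measure.real, Function.comp_def] using (ENNReal.tendsto_toReal ENNReal.zero_ne_top).comp h2

end Mixtures

/-! ### Compactness of the set of selection laws -/

section Compactness

open Set Filter Topology
open scoped ENNReal

variable {Ω S : Type*} [MeasurableSpace Ω] [MetricSpace S] [Countable S] [MeasurableSpace S]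
  [BorelSpace S] {μ : Measure Ω} [IsProbabilityMeasure μ] {X : Ω → Set S}

/-- Selection laws are stable under limits of finite mixtures. -/
lemma mem_distrOfSelections_of_tendsto_mixLaw (hatomless : AtomlessMeasure μ)
    (hXcl : ∀ ω, IsClosed (X ω))
    (hXm : ∀ C, IsClosed C → MeasurableSet {ω | (X ω ∩ C).Nonempty})
    {J : ℕ → Type*} [∀ n, Fintype (J n)] {w : ∀ n, stdSimplex ℝ (J n)}
    {y : ∀ n, J n → ProbabilityMeasure S} {x : ProbabilityMeasure S}
    (hy : ∀ n j, y n j ∈ distrOfSelections μ X)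
    (hx : Tendsto (fun n => mixLaw (w n) (y n)) atTop (𝓝 x)) :
    x ∈ distrOfSelections μ X := by
  choose G hG hGX hGy using hy
  refine exists_selection_of_mixLaw hatomless hXcl hXm hG hGy hx fun C _ => ?_
  have hall : ∀ᵐ ω ∂μ, ∀ n j, G n j ω ∈ X ω := ae_all_iff.2 fun n => ae_all_iff.2 fun j => hGX n j
  filter_upwards [hall] with ω hω hne
  exact .of_forall fun n j _ hC => hne ⟨_, hω n j, hC⟩

lemma mixLaw_mem_distrOfSelections (hatomless : AtomlessMeasure μ)
    (hXcl : ∀ ω, IsClosed (X ω))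
    (hXm : ∀ C, IsClosed C → MeasurableSet {ω | (X ω ∩ C).Nonempty})
    {J : Type*} [Fintype J] (w : stdSimplex ℝ J) {y : J → ProbabilityMeasure S}
    (hy : ∀ j, y j ∈ distrOfSelections μ X) : mixLaw w y ∈ distrOfSelections μ X :=
  mem_distrOfSelections_of_tendsto_mixLaw hatomless hXcl hXm (J := fun _ => J) (w := fun _ => w)
    (y := fun _ => y) (fun _ => hy) tendsto_const_nhds

lemma isClosed_distrOfSelections (hatomless : AtomlessMeasure μ)
    (hXcl : ∀ ω, IsClosed (X ω))
    (hXm : ∀ C, IsClosed C → MeasurableSet {ω | (X ω ∩ C).Nonempty}) :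
    IsClosed (distrOfSelections μ X) := by
  refine IsSeqClosed.isClosed fun xs x hxs hx => ?_
  let w : stdSimplex ℝ Unit := ⟨fun _ => 1, by simp [stdSimplex]⟩
  refine mem_distrOfSelections_of_tendsto_mixLaw hatomless hXcl hXm (J := fun _ => Unit)
    (w := fun _ => w) (y := fun n _ => xs n) (fun n _ => hxs n) (hx.congr fun n => ?_)
  apply Subtype.ext
  simp [mixLaw, w]

/-- By inner approximation, finitely many balls of each radius contain `X ω` with probability close
to `1`; the intersection of these finite unions is compact, since `S` is complete. -/
lemma isTightMeasureSet_distrOfSelections [CompleteSpace S] (hXcomp : ∀ ω, IsCompact (X ω))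
    (hXm : ∀ C, IsClosed C → MeasurableSet {ω | (X ω ∩ C).Nonempty}) :
    IsTightMeasureSet
      {((ν : ProbabilityMeasure S) : Measure S) | ν ∈ distrOfSelections μ X} := by
  rw [isTightMeasureSet_iff_exists_isCompact_measure_compl_le]
  intro ε hε
  rcases isEmpty_or_nonempty S with hS | hS
  · exact ⟨∅, isCompact_empty, fun ν _ => by simp [univ_eq_empty_iff.2 hS]⟩
  obtain ⟨φ, hφ⟩ := exists_surjective_nat S
  obtain ⟨ε', hε'0, hε'⟩ := ENNReal.exists_pos_sum_of_countable' hε.ne' ℕ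
  let V (k N : ℕ) : Set S := ⋃ i ∈ Finset.range N, Metric.ball (φ i) (shrinkRadius k)
  have hVo : ∀ k N, IsOpen (V k N) := fun k N =>
    isOpen_biUnion fun _ _ => Metric.isOpen_ball
  have hVmono : ∀ k, Monotone (V k) := fun k N M hNM =>
    biUnion_subset_biUnion_left fun i hi => Finset.range_mono hNM hi
  have hN : ∀ k, ∃ N, μ {ω | (X ω ∩ (V k N)ᶜ).Nonempty} ≤ ε' k := by
    intro k
    have h := tendsto_measure_iInter_atTop (μ := μ)
      (s := fun N => {ω | (X ω ∩ (V k N)ᶜ).Nonempty})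
      (fun N => (hXm _ (hVo k N).isClosed_compl).nullMeasurableSet)
      (fun N M hNM ω hω => hω.mono
        (inter_subset_inter_right _ (compl_subset_compl.2 (hVmono k hNM))))
      ⟨0, measure_ne_top _ _⟩
    have hI : ⋂ N, {ω | (X ω ∩ (V k N)ᶜ).Nonempty} = ∅ := by
      refine eq_empty_of_forall_notMem fun ω hω => ?_
      obtain ⟨N, hN⟩ := (hXcomp ω).elim_directed_cover (V k) (hVo k) (fun s _ => by
        obtain ⟨i, rfl⟩ := hφ s
        exact mem_iUnion.2 ⟨i + 1, mem_iUnion₂.2 ⟨i, by simp,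
          Metric.mem_ball_self (shrinkRadius_pos k)⟩⟩) (hVmono k).directed_le
      obtain ⟨s, hs, hs'⟩ := mem_iInter.1 hω N
      exact hs' (hN hs)
    rw [hI, measure_empty] at h
    exact (h.eventually_le_const (hε'0 k)).exists
  choose N hN using hN
  let K : Set S := ⋂ k, ⋃ i ∈ Finset.range (N k), Metric.closedBall (φ i) (shrinkRadius k)
  refine ⟨K, TotallyBounded.isCompact_of_isClosed ?_ ?_, ?_⟩
  · refine Metric.totallyBounded_iff.2 fun δ hδ => ?_
    obtain ⟨k, hk⟩ := (tendsto_shrinkRadius.eventually_lt_const hδ).exists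
    refine ⟨Set.image φ (Finset.range (N k)), (Finset.finite_toSet _).image φ, fun s hs => ?_⟩
    obtain ⟨i, hi, his⟩ := mem_iUnion₂.1 (mem_iInter.1 hs k)
    exact mem_iUnion₂.2 ⟨φ i, mem_image_of_mem φ hi, Metric.closedBall_subset_ball hk his⟩
  · exact isClosed_iInter fun k => isClosed_biUnion_finset fun i _ => Metric.isClosed_closedBall
  · rintro _ ⟨ν, ⟨f, hf, hfX, hν⟩, rfl⟩
    rw [hν]
    have hKm : MeasurableSet K := (isClosed_iInter fun k =>
      isClosed_biUnion_finset fun i _ => Metric.isClosed_closedBall).measurableSet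
    rw [Measure.map_apply hf hKm.compl]
    calc μ (f ⁻¹' Kᶜ) ≤ μ (⋃ k, {ω | (X ω ∩ (V k (N k))ᶜ).Nonempty}) := by
          refine measure_mono_ae ?_
          filter_upwards [hfX] with ω hω h
          obtain ⟨k, hk⟩ := not_forall.1 fun h' => h (mem_iInter.2 h')
          refine mem_iUnion.2 ⟨k, f ω, hω, fun hV => hk ?_⟩
          obtain ⟨i, hi, his⟩ := mem_iUnion₂.1 hV
          exact mem_iUnion₂.2 ⟨i, hi, Metric.ball_subset_closedBall his⟩
      _ ≤ ∑' k, μ {ω | (X ω ∩ (V k (N k))ᶜ).Nonempty} := measure_iUnion_le _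
      _ ≤ ∑' k, ε' k := ENNReal.tsum_le_tsum hN
      _ ≤ ε := hε'.le

lemma isCompact_distrOfSelections [CompleteSpace S] (hatomless : AtomlessMeasure μ)
    (hXcomp : ∀ ω, IsCompact (X ω))
    (hXm : ∀ C, IsClosed C → MeasurableSet {ω | (X ω ∩ C).Nonempty}) :
    IsCompact (distrOfSelections μ X) := by
  have h := isCompact_closure_of_isTightMeasureSet
    (isTightMeasureSet_distrOfSelections (μ := μ) hXcomp hXm)
  rwa [(isClosed_distrOfSelections hatomless (fun ω => (hXcomp ω).isClosed) hXm).closure_eq] at h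

end Compactness

/-! ### Approximate fixed points of mixtures -/

section FixedPoint

open Set Filter Topology

/-- Kakutani-type approximate fixed points: `mix t` spans the images of the points of `t` under an
arbitrary self-map, and Brouwer's theorem applied to a partition of unity subordinate to a finite
`ε`-net gives a point all of whose active generators come from net points within `ε` of it. -/
lemma exists_approx_mix {E : Type*} [PseudoMetricSpace E] {D : Set E} (hD : IsCompact D)
    (hne : D.Nonempty) (mix : ∀ t : Finset E, stdSimplex ℝ t → E)
    (hmix : ∀ t, Continuous (mix t)) (hmixD : ∀ t : Finset E, (t : Set E) ⊆ D → ∀ w, mix t w ∈ D)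
    {ε : ℝ} (hε : 0 < ε) :
    ∃ t : Finset E, (t : Set E) ⊆ D ∧ ∃ w : stdSimplex ℝ t, ∀ i, 0 < w.1 i →
      dist (mix t w) (i : E) < ε := by
  obtain ⟨t', ht'D, ht'fin, hcov⟩ := hD.finite_cover_balls hε
  lift t' to Finset E using ht'fin with t
  refine ⟨t, ht'D, ?_⟩
  have hnet : ∀ z ∈ D, ∃ i : t, dist z i < ε := fun z hz => by
    obtain ⟨i, hi, hzi⟩ := mem_iUnion₂.1 (hcov hz)
    exact ⟨⟨i, hi⟩, hzi⟩
  have : Nonempty t := hne.elim fun z hz => (hnet z hz).elim fun i _ => ⟨i⟩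
  let q : t → stdSimplex ℝ t → ℝ := fun i w => max 0 (ε - dist (mix t w) i)
  have hq0 : ∀ i w, 0 ≤ q i w := fun i w => le_max_left _ _
  have hqc : ∀ i, Continuous (q i) := fun i =>
    continuous_const.max (continuous_const.sub ((hmix t).dist continuous_const))
  have hpos : ∀ w, 0 < ∑ i, q i w := fun w => by
    obtain ⟨i, hi⟩ := hnet _ (hmixD t ht'D w)
    exact Finset.sum_pos' (fun i _ => hq0 i w)
      ⟨i, Finset.mem_univ i, lt_max_of_lt_right (sub_pos.2 hi)⟩
  let f : stdSimplex ℝ t → stdSimplex ℝ t := fun w =>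
    ⟨fun i => q i w / ∑ j, q j w, fun i => div_nonneg (hq0 i w) (hpos w).le, by
      rw [← Finset.sum_div, div_self (hpos w).ne']⟩
  have hf : Continuous f := Continuous.subtype_mk (continuous_pi fun i =>
    (hqc i).div (continuous_finsetSum _ fun j _ => hqc j) fun w => (hpos w).ne') _
  obtain ⟨w, hw⟩ := brouwer_stdSimplex f hf
  refine ⟨w, fun i hi => ?_⟩
  by_contra! hdist
  have h1 : w.1 i = q i w / ∑ j, q j w := by
    conv_lhs => rw [← hw]
  have h2 : q i w = 0 := max_eq_left (sub_nonpos.2 hdist)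
  rw [h1, h2, zero_div] at hi
  exact hi.false

end FixedPoint

/-! ### The random fixed point theorem -/

/-- Random fixed point theorem for a single agent (Theorem 16 of the paper). -/
theorem stmt_13 {Ω S : Type*} [MeasurableSpace Ω]
    [MetricSpace S] [Countable S] [CompleteSpace S] [MeasurableSpace S] [BorelSpace S]
    (μ : Measure Ω) [IsProbabilityMeasure μ] (hatomless : AtomlessMeasure μ)
    (X : Ω → Set S)
    (hXne : ∀ ω, (X ω).Nonempty) (hXcomp : ∀ ω, IsCompact (X ω))
    (hXmeas : ∀ C : Set S, IsClosed C → MeasurableSet {ω : Ω | (X ω ∩ C).Nonempty})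
    (A : Ω → ProbabilityMeasure S → Set S)
    (hAmeas : ∀ lam ∈ distrOfSelections μ X, ∀ C : Set S, IsClosed C →
      MeasurableSet {ω : Ω | (A ω lam ∩ C).Nonempty})
    (hAne : ∀ ω : Ω, ∀ lam ∈ distrOfSelections μ X, (A ω lam).Nonempty)
    (hAcomp : ∀ ω : Ω, ∀ lam ∈ distrOfSelections μ X, IsCompact (A ω lam))
    (hAusc : ∀ ω : Ω, ∀ lam ∈ distrOfSelections μ X,
      ∀ V : Set S, IsOpen V → A ω lam ⊆ V →
        ∃ U : Set (ProbabilityMeasure S), IsOpen U ∧ lam ∈ U ∧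
          ∀ ρ ∈ U ∩ distrOfSelections μ X, A ω ρ ⊆ V)
    (hAX : ∀ ω : Ω, ∀ lam : ProbabilityMeasure S, A ω lam ⊆ X ω) :
    ∃ lamStar ∈ distrOfSelections μ X, ∃ g : Ω → S,
      Measurable g ∧ (∀ᵐ ω ∂μ, g ω ∈ X ω) ∧
      ((lamStar : ProbabilityMeasure S) : Measure S) = μ.map g ∧
      ∀ᵐ ω ∂μ, g ω ∈ A ω lamStar := by
  classical
  let : PseudoMetricSpace (ProbabilityMeasure S) :=
    TopologicalSpace.pseudoMetrizableSpacePseudoMetric _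
  have hΩ : Nonempty Ω := nonempty_of_isProbabilityMeasure μ
  have hS : Nonempty S := hΩ.elim fun ω => (hXne ω).nonempty
  have hXcl : ∀ ω, IsClosed (X ω) := fun ω => (hXcomp ω).isClosed
  have hsel : ∀ F : Ω → Set S, (∀ ω, (F ω).Nonempty) →
      (∀ C, IsClosed C → MeasurableSet {ω | (F ω ∩ C).Nonempty}) →
      ∃ g : Ω → S, ∃ y : ProbabilityMeasure S, Measurable g ∧ (∀ ω, g ω ∈ F ω) ∧
        (y : Measure S) = μ.map g := by
    intro F hne hm
    obtain ⟨g, hg, hgF⟩ := exists_measurable_selection (E := fun s => {ω | s ∈ F ω})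
      (fun s => by simpa using hm {s} isClosed_singleton) hne
    exact ⟨g, ⟨_, Measure.isProbabilityMeasure_map hg.aemeasurable⟩, hg, hgF, rfl⟩
  have hD : IsCompact (distrOfSelections μ X) :=
    isCompact_distrOfSelections hatomless hXcomp hXmeas
  have hDne : (distrOfSelections μ X).Nonempty := by
    obtain ⟨g, y, hg, hgX, hy⟩ := hsel X hXne hXmeas
    exact ⟨y, g, hg, .of_forall hgX, hy⟩
  have hPM : Nonempty (ProbabilityMeasure S) := hDne.to_type
  choose! G Φ hG hGA hΦ using fun lam (hlam : lam ∈ distrOfSelections μ X) =>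
    hsel (fun ω => A ω lam) (fun ω => hAne ω lam hlam) (hAmeas lam hlam)
  have hΦD : ∀ lam ∈ distrOfSelections μ X, Φ lam ∈ distrOfSelections μ X := fun lam hlam =>
    ⟨G lam, hG lam hlam, .of_forall fun ω => hAX ω lam (hGA lam hlam ω), hΦ lam hlam⟩
  have hmixD : ∀ t : Finset (ProbabilityMeasure S), (t : Set _) ⊆ distrOfSelections μ X →
      ∀ w : stdSimplex ℝ t, mixLaw w (fun i => Φ i) ∈ distrOfSelections μ X := fun t ht w =>
    mixLaw_mem_distrOfSelections hatomless hXcl hXmeas w fun i => hΦD _ (ht i.2)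
  choose t htD w hw using fun n : ℕ => exists_approx_mix hD hDne
    (fun t w => mixLaw w (fun i : t => Φ i)) (fun t => continuous_mixLaw _) hmixD
    (shrinkRadius_pos n)
  obtain ⟨x, hxD, ψ, hψ, hx⟩ := hD.tendsto_subseq fun n => hmixD (t n) (htD n) (w n)
  refine ⟨x, hxD, ?_⟩
  obtain ⟨g, hg, hgA, hgx⟩ := exists_selection_of_mixLaw hatomless (F := fun ω => A ω x)
    (fun ω => (hAcomp ω x hxD).isClosed) (hAmeas x hxD) (J := fun n => t (ψ n))
    (w := fun n => w (ψ n)) (y := fun n i => Φ i) (G := fun n i => G i)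
    (fun n i => hG _ (htD _ i.2)) (fun n i => hΦ _ (htD _ i.2)) hx (fun C hC => .of_forall (by
      intro ω hω
      -- upper semicontinuity: `A ω ρ` misses `C` for all selection laws `ρ` near `x`
      obtain ⟨U, hU, hxU, hUA⟩ := hAusc ω x hxD Cᶜ hC.isOpen_compl
        fun s hs hsC => hω ⟨s, hs, hsC⟩
      obtain ⟨δ, hδ, hδU⟩ := Metric.isOpen_iff.1 hU x hxU
      filter_upwards [Metric.tendsto_nhds.1 hx (δ / 2) (half_pos hδ),
        (tendsto_shrinkRadius.comp hψ.tendsto_atTop).eventually_lt_const (half_pos hδ)]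
        with n h1 h2 i hi
      have h3 : dist (i : ProbabilityMeasure S) x < δ := by
        have h4 := hw (ψ n) i hi
        have h5 := dist_triangle_left (i : ProbabilityMeasure S) x
          (mixLaw (w (ψ n)) fun i => Φ i)
        simp only [Function.comp_apply] at h1 h2
        linarith
      have hiD := htD _ i.2
      exact hUA i ⟨hδU h3, hiD⟩ (hGA _ hiD ω)))
  exact ⟨g, hg, hgA.mono fun ω h => hAX ω x h, hgx, hgA⟩
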